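/- arXiv:1205.4281 — 5 statements merged into one kernel-verified Lean document; each statement's English description precedes it below -/
import Mathlib

section
/- Suppose N(x) ≤ C·x for all x ≥ 1. Then for every complex s with Re s > 1: −ζ'(s)/ζ(s) = ∑_{k ∈ ℕ} ∑_{m ≥ 1} log(p k) · (p k)^{−ms}, the double series converging absolutely, and moreover ∫₁^∞ ψ(x) x^{−s−1} dx = −ζ'(s)/(s ζ(s)). -/
open MeasureTheory Real Filter Complex

/-- The generalized integer attached to an exponent vector `α`: `n(α) = ∏ k, (p k)^(α k)`. -/
noncomputable def beurlingInt (p : ℕ → ℝ) (α : ℕ →₀ ℕ) : ℝ :=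
  α.prod fun k e => (p k) ^ e

/-- Counting function of generalized integers: `N(x) = #{α : n(α) < x}`. -/
noncomputable def beurlingN (p : ℕ → ℝ) (x : ℝ) : ℕ :=
  Set.ncard {α : ℕ →₀ ℕ | beurlingInt p α < x}

/-- Chebyshev function `ψ(x) = ∑_{k, m ≥ 1, (p k)^m < x} log (p k)`. -/
noncomputable def beurlingPsi (p : ℕ → ℝ) (x : ℝ) : ℝ :=
  ∑' q : {q : ℕ × ℕ // 1 ≤ q.2 ∧ (p q.1) ^ q.2 < x}, Real.log (p (q : ℕ × ℕ).1)

/-- The Beurling zeta function `ζ(s) = ∑_α n(α)^{-s}`. -/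
noncomputable def beurlingZeta (p : ℕ → ℝ) (s : ℂ) : ℂ :=
  ∑' α : ℕ →₀ ℕ, (beurlingInt p α : ℂ) ^ (-s)

/-- The derivative of the Beurling zeta function, `ζ'(s) = -∑_α log(n(α)) n(α)^{-s}`. -/
noncomputable def beurlingZetaDeriv (p : ℕ → ℝ) (s : ℂ) : ℂ :=
  -∑' α : ℕ →₀ ℕ, (Real.log (beurlingInt p α) : ℂ) * (beurlingInt p α : ℂ) ^ (-s)


section BeurlingHelpers

variable {p : ℕ → ℝ}

lemma bI_pos (h1 : ∀ k, 1 < p k) (α : ℕ →₀ ℕ) : 1 ≤ beurlingInt p α := by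
  unfold beurlingInt Finsupp.prod
  apply Finset.one_le_prod
  intro k _
  exact one_le_pow₀ (h1 k).le

lemma bI_zero : beurlingInt p 0 = 1 := by simp [beurlingInt]

lemma bI_add (α β : ℕ →₀ ℕ) : beurlingInt p (α + β) = beurlingInt p α * beurlingInt p β := by
  unfold beurlingInt
  exact Finsupp.prod_add_index' (by simp) (by intro a b c; exact pow_add _ _ _)

lemma bI_single (k m : ℕ) : beurlingInt p (Finsupp.single k m) = p k ^ m := by
  unfold beurlingInt
  exact Finsupp.prod_single_index (by simp)

lemma bI_log (h1 : ∀ k, 1 < p k) (α : ℕ →₀ ℕ) :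
    Real.log (beurlingInt p α) = ∑ k ∈ α.support, (α k : ℝ) * Real.log (p k) := by
  unfold beurlingInt Finsupp.prod
  rw [Real.log_prod]
  · simp [Real.log_pow]
  · intro k _
    have := h1 k
    positivity

lemma bI_ge_pow (h1 : ∀ k, 1 < p k) (α : ℕ →₀ ℕ) (k : ℕ) : p k ^ α k ≤ beurlingInt p α := by
  have h : α = Finsupp.single k (α k) + α.erase k := (Finsupp.single_add_erase k α).symm
  conv_rhs => rw [h, bI_add, bI_single]
  have := bI_pos h1 (α.erase k)
  have h2 := h1 k
  exact le_mul_of_one_le_right (by positivity) this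

lemma bI_finite (h1 : ∀ k, 1 < p k) (hmono : Monotone p) (hptop : Tendsto p atTop atTop) (x : ℝ) :
    {α : ℕ →₀ ℕ | beurlingInt p α < x}.Finite := by
  obtain ⟨K, hK⟩ := (hptop.eventually_ge_atTop x).exists
  obtain ⟨M, hM⟩ := pow_unbounded_of_one_lt x (h1 0)
  have hfin : ((Finset.range K).finsupp (fun _ => Finset.range M) : Set (ℕ →₀ ℕ)).Finite :=
    Finset.finite_toSet _
  refine hfin.subset ?_
  intro α hα
  have hα' : beurlingInt p α < x := hα
  rw [Finset.mem_coe, Finset.mem_finsupp_iff]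
  have hM' : ∀ k, α k < M := by
    intro k
    by_contra hk
    push Not at hk
    have a1 := bI_ge_pow h1 α k
    have a2 : p 0 ^ M ≤ p k ^ α k :=
      (pow_le_pow_left₀ (by linarith [h1 0]) (hmono (Nat.zero_le k)) M).trans
        (pow_le_pow_right₀ (h1 k).le hk)
    linarith
  constructor
  · intro k hk
    rw [Finset.mem_range]
    by_contra hkK
    push Not at hkK
    have a1 := bI_ge_pow h1 α k
    have a2 : p K ≤ p k := hmono hkK
    have a3 : p k ≤ p k ^ α k := le_self_pow₀ (h1 k).le (Finsupp.mem_support_iff.mp hk)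
    linarith
  · intro k _
    exact Finset.mem_range.mpr (hM' k)

lemma bI_summable (h1 : ∀ k, 1 < p k) (hmono : Monotone p) (hptop : Tendsto p atTop atTop)
    (C : ℝ) (hC : ∀ x : ℝ, 1 ≤ x → (beurlingN p x : ℝ) ≤ C * x) (σ : ℝ) (hσ : 1 < σ) :
    Summable (fun α : ℕ →₀ ℕ => beurlingInt p α ^ (-σ)) := by
  classical
  set r : ℝ := (2 : ℝ) ^ (-σ) with hr
  have hrpos : 0 < r := by positivity
  have hr2 : 2 * r < 1 := by
    have : (2 : ℝ) * r = 2 ^ (1 - σ) := by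
      rw [hr, sub_eq_add_neg, Real.rpow_add (by norm_num), Real.rpow_one]
    rw [this]
    exact Real.rpow_lt_one_of_one_lt_of_neg (by norm_num) (by linarith)
  let g : ℕ × (ℕ →₀ ℕ) → ℝ := fun z => if beurlingInt p z.2 < 2 ^ z.1 then r ^ z.1 else 0
  have hg0 : 0 ≤ g := by
    intro z
    simp only [g, Pi.zero_apply]
    split_ifs <;> positivity
  have hfib : ∀ j : ℕ, HasSum (fun α => g (j, α)) ((beurlingN p (2 ^ j) : ℝ) * r ^ j) := by
    intro j
    have hf := bI_finite h1 hmono hptop (2 ^ j)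
    have h : HasSum (fun α => g (j, α)) (∑ α ∈ hf.toFinset, g (j, α)) :=
      hasSum_sum_of_ne_finset_zero (by
      intro α hα
      have : ¬ beurlingInt p α < 2 ^ j := by simpa using hα
      simp [g, this])
    convert h using 1
    rw [Finset.sum_congr rfl (g := fun _ => r ^ j)]
    · rw [Finset.sum_const, nsmul_eq_mul, beurlingN, Set.ncard_eq_toFinset_card _ hf]
    · intro α hα
      have : beurlingInt p α < 2 ^ j := by simpa using hα
      simp [g, this]
  have hgs : Summable g := by
    rw [summable_prod_of_nonneg hg0]
    refine ⟨fun j => (hfib j).summable, ?_⟩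
    have : Summable (fun j : ℕ => C * (2 * r) ^ j) :=
      (summable_geometric_of_lt_one (by positivity) hr2).mul_left C
    refine this.of_nonneg_of_le (fun j => tsum_nonneg fun α => hg0 _) ?_
    intro j
    rw [(hfib j).tsum_eq, mul_pow, ← mul_assoc]
    exact mul_le_mul_of_nonneg_right (hC _ (one_le_pow₀ (by norm_num))) (by positivity)
  have hex : ∀ α : ℕ →₀ ℕ, ∃ j : ℕ, 2 ^ j ≤ beurlingInt p α ∧ beurlingInt p α < 2 ^ (j + 1) := by
    intro α
    exact exists_nat_pow_near (bI_pos h1 α) (by norm_num)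
  choose J hJ1 hJ2 using hex
  have hs := hgs.comp_injective (i := fun α : ℕ →₀ ℕ => (J α + 1, α))
    (fun a b h => (Prod.mk.inj h).2)
  refine (hs.mul_left r⁻¹).of_nonneg_of_le ?_ ?_
  · intro α
    have := bI_pos h1 α
    positivity
  · intro α
    simp only [Function.comp, g, hJ2 α, if_true]
    rw [pow_succ, mul_comm, mul_assoc, mul_inv_cancel₀ hrpos.ne', mul_one, hr, ← Real.rpow_natCast,
      ← Real.rpow_mul (by norm_num), mul_comm, Real.rpow_mul (by norm_num), Real.rpow_natCast]
    exact Real.rpow_le_rpow_of_nonpos (by positivity) (hJ1 α) (by linarith)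

lemma bI_summable_log (h1 : ∀ k, 1 < p k) (hmono : Monotone p) (hptop : Tendsto p atTop atTop)
    (C : ℝ) (hC : ∀ x : ℝ, 1 ≤ x → (beurlingN p x : ℝ) ≤ C * x) (σ : ℝ) (hσ : 1 < σ) :
    Summable (fun α : ℕ →₀ ℕ => Real.log (beurlingInt p α) * beurlingInt p α ^ (-σ)) := by
  have hs := bI_summable h1 hmono hptop C hC ((1 + σ) / 2) (by linarith)
  refine (hs.mul_left ((σ - 1) / 2)⁻¹).of_nonneg_of_le ?_ ?_
  · intro α
    have := bI_pos h1 α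
    have := Real.log_nonneg this
    positivity
  · intro α
    have h := bI_pos h1 α
    have h0 : 0 < beurlingInt p α := by linarith
    have h2 := Real.log_le_rpow_div h0.le (ε := (σ - 1) / 2) (by linarith)
    calc _ ≤ beurlingInt p α ^ ((σ - 1) / 2) / ((σ - 1) / 2) * beurlingInt p α ^ (-σ) :=
          mul_le_mul_of_nonneg_right h2 (by positivity)
      _ = ((σ - 1) / 2)⁻¹ * (beurlingInt p α ^ ((σ - 1) / 2) * beurlingInt p α ^ (-σ)) := by ring
      _ = _ := by
        rw [← Real.rpow_add h0]
        congr 2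
        ring

lemma bI_norm (h1 : ∀ k, 1 < p k) (s : ℂ) (α : ℕ →₀ ℕ) :
    ‖(beurlingInt p α : ℂ) ^ (-s)‖ = beurlingInt p α ^ (-s.re) := by
  have h := bI_pos h1 α
  rw [Complex.norm_cpow_eq_rpow_re_of_pos (by linarith)]
  simp

lemma bI_cadd (h1 : ∀ k, 1 < p k) (s : ℂ) (α β : ℕ →₀ ℕ) :
    (beurlingInt p (α + β) : ℂ) ^ (-s) =
      (beurlingInt p α : ℂ) ^ (-s) * (beurlingInt p β : ℂ) ^ (-s) := by
  have h := bI_pos h1 α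
  have h' := bI_pos h1 β
  rw [bI_add, Complex.ofReal_mul, Complex.mul_cpow_ofReal_nonneg (by linarith) (by linarith)]

lemma bI_csingle (h1 : ∀ k, 1 < p k) (s : ℂ) (k m : ℕ) :
    (beurlingInt p (Finsupp.single k m) : ℂ) ^ (-s) = (p k : ℂ) ^ (-(m : ℂ) * s) := by
  have h := h1 k
  have h0 : 0 < p k := by linarith
  have hpc : (p k : ℂ) ≠ 0 := by exact_mod_cast h0.ne'
  have hpm : ((p k ^ m : ℝ) : ℂ) ≠ 0 := by exact_mod_cast (pow_pos h0 m).ne'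
  rw [bI_single, Complex.cpow_def_of_ne_zero hpm, Complex.cpow_def_of_ne_zero hpc,
    ← Complex.ofReal_log (pow_pos h0 m).le, ← Complex.ofReal_log h0.le, Real.log_pow]
  congr 1
  push_cast
  ring

/-- Nonvanishing of the zeta function. -/
lemma bzeta_ne_zero (h1 : ∀ k, 1 < p k) (s : ℂ)
    (hs : Summable (fun α : ℕ →₀ ℕ => ‖(beurlingInt p α : ℂ) ^ (-s)‖)) :
    beurlingZeta p s ≠ 0 := by
  classical
  intro h0
  let f : ℕ → (ℕ →₀ ℕ) → ℂ := fun K α =>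
    if ∀ k < K, α k = 0 then (beurlingInt p α : ℂ) ^ (-s) else 0
  have hfle : ∀ K α, ‖f K α‖ ≤ ‖(beurlingInt p α : ℂ) ^ (-s)‖ := by
    intro K α
    simp only [f]
    split_ifs <;> simp
  have hfs : ∀ K, Summable (f K) := fun K => Summable.of_norm (hs.of_nonneg_of_le
    (fun _ => norm_nonneg _) (hfle K))
  have hz : ∀ K, ∑' α, f K α = 0 := by
    intro K
    induction K with
    | zero => simpa [f, beurlingZeta] using h0
    | succ K ih =>
      let e : (ℕ →₀ ℕ) → (ℕ →₀ ℕ) := fun α => Finsupp.single K 1 + α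
      have he : Function.Injective e := fun a b h => add_left_cancel h
      let g : (ℕ →₀ ℕ) → ℂ := fun α => if α K = 0 then 0 else f K α
      have hg : ∑' α, g (e α) = ∑' α, g α := by
        apply he.tsum_eq
        intro α hα
        have hK : α K ≠ 0 := by
          intro h
          exact hα (by simp [g, h])
        refine ⟨α - Finsupp.single K 1, ?_⟩
        apply add_tsub_cancel_of_le
        rw [Finsupp.single_le_iff]
        omega
      have hg2 : ∀ α, g (e α) = (beurlingInt p (Finsupp.single K 1) : ℂ) ^ (-s) * f K α := by
        intro α
        have hc : (∀ k < K, (e α) k = 0) ↔ ∀ k < K, α k = 0 := by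
          refine forall₂_congr fun k hk => ?_
          simp [e, hk.ne']
        have hc2 : (e α) K ≠ 0 := by simp [e]
        simp only [g, f, hc, hc2, if_false]
        split_ifs
        · exact bI_cadd h1 s _ _
        · simp
      have hg0 : ∑' α, g α = 0 := by
        rw [← hg]
        simp only [hg2]
        rw [tsum_mul_left, ih, mul_zero]
      have hdec : ∀ α, f (K + 1) α = f K α - g α := by
        intro α
        by_cases hK : α K = 0
        · have hc : (∀ k < K + 1, α k = 0) ↔ ∀ k < K, α k = 0 := by
            rw [Nat.forall_lt_succ_right]
            simp [hK]
          simp only [f, g, hK, hc, if_true, if_false, sub_zero, sub_self]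
        · have hc : ¬ (∀ k < K + 1, α k = 0) := fun h => hK (h K (by omega))
          simp only [f, g, hK, hc, if_true, if_false, sub_zero, sub_self]
      have hgs : Summable g := Summable.of_norm (hs.of_nonneg_of_le
        (fun _ => norm_nonneg _) (fun α => by
          refine le_trans ?_ (hfle K α)
          simp only [g]
          split_ifs <;> simp))
      simp only [hdec]
      rw [(hfs K).tsum_sub hgs, ih, hg0, sub_zero]
  have hlim : Tendsto (fun K => ∑' α, f K α) atTop
      (nhds (∑' α : ℕ →₀ ℕ, if α = 0 then (1 : ℂ) else 0)) := by
    apply tendsto_tsum_of_dominated_convergence hs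
    · intro α
      by_cases hα : α = 0
      · subst hα
        simp [f, bI_zero]
      · obtain ⟨k, hk⟩ := Finsupp.ne_iff.mp hα
        apply tendsto_const_nhds.congr'
        filter_upwards [eventually_gt_atTop k] with K hK
        have hc : ¬ (∀ k < K, α k = 0) := fun h => hk (h k hK)
        simp [f, hα, hc]
    · exact Eventually.of_forall fun K α => hfle K α
  simp only [hz, tsum_ite_eq] at hlim
  exact zero_ne_one (tendsto_nhds_unique tendsto_const_nhds hlim)

lemma bL_norm (h1 : ∀ k, 1 < p k) (s : ℂ) (k m : ℕ) :
    ‖(Real.log (p k) : ℂ) * (p k : ℂ) ^ (-(m : ℂ) * s)‖ = Real.log (p k) * (p k ^ m) ^ (-s.re) := by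
  rw [norm_mul, ← bI_csingle h1, bI_norm h1, bI_single, Complex.norm_real, Real.norm_eq_abs,
    abs_of_nonneg (Real.log_nonneg (h1 k).le)]

lemma bL_summable (h1 : ∀ k, 1 < p k) (s : ℂ)
    (hs : Summable (fun α : ℕ →₀ ℕ => Real.log (beurlingInt p α) * beurlingInt p α ^ (-s.re))) :
    Summable (fun q : {q : ℕ × ℕ // 1 ≤ q.2} =>
        ‖(Real.log (p (q : ℕ × ℕ).1) : ℂ) *
          (p (q : ℕ × ℕ).1 : ℂ) ^ (-((q : ℕ × ℕ).2 : ℂ) * s)‖) := by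
  have hinj : Function.Injective (fun q : {q : ℕ × ℕ // 1 ≤ q.2} =>
      Finsupp.single (q : ℕ × ℕ).1 (q : ℕ × ℕ).2) := by
    rintro ⟨⟨k, m⟩, hm⟩ ⟨⟨k', m'⟩, hm'⟩ h
    simp only at h hm hm'
    rw [Finsupp.single_eq_single_iff] at h
    rcases h with ⟨rfl, rfl⟩ | ⟨h, _⟩
    · rfl
    · omega
  refine (hs.comp_injective hinj).of_nonneg_of_le (fun _ => norm_nonneg _) ?_
  rintro ⟨⟨k, m⟩, hm⟩
  simp only [Function.comp, bI_single]
  rw [bL_norm h1]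
  have := h1 k
  refine mul_le_mul_of_nonneg_right ?_ (by positivity)
  exact Real.log_le_log (by linarith) (le_self_pow₀ (h1 k).le (by simp at hm; omega))

lemma bI_log_tsum (h1 : ∀ k, 1 < p k) (α : ℕ →₀ ℕ) :
    ∑' q : {q : ℕ × ℕ // 1 ≤ q.2},
      (if (q : ℕ × ℕ).2 ≤ α (q : ℕ × ℕ).1 then (Real.log (p (q : ℕ × ℕ).1) : ℂ) else 0)
      = (Real.log (beurlingInt p α) : ℂ) := by
  classical
  let S : Set (ℕ × ℕ) := {q | 1 ≤ q.2}
  let f : ℕ × ℕ → ℂ := fun q => if q.2 ≤ α q.1 then (Real.log (p q.1) : ℂ) else 0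
  have e1 : ∑' q : S, f q = ∑' q, S.indicator f q := tsum_subtype S f
  change ∑' q : S, f q = _
  rw [e1]
  set M := ∑ k ∈ α.support, α k with hM
  rw [tsum_eq_sum (s := α.support ×ˢ Finset.range (M + 1))]
  · rw [Finset.sum_product, bI_log h1, Complex.ofReal_sum]
    refine Finset.sum_congr rfl fun k hk => ?_
    have hle : α k ≤ M := Finset.single_le_sum (f := fun k => α k) (fun _ _ => Nat.zero_le _) hk
    have : ∀ m, S.indicator f (k, m) = if m ∈ Finset.Icc 1 (α k) then (Real.log (p k) : ℂ) else 0 := by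
      intro m
      by_cases hm : 1 ≤ m <;> by_cases hm2 : m ≤ α k <;>
        simp [Set.indicator, S, f, hm, hm2]
    simp only [this]
    rw [← Finset.sum_filter, Finset.sum_const, nsmul_eq_mul, Complex.ofReal_mul]
    congr 1
    have hfil : (Finset.range (M + 1)).filter (fun m => m ∈ Finset.Icc 1 (α k)) =
        Finset.Icc 1 (α k) := by
      ext m
      simp only [Finset.mem_filter, Finset.mem_range, Finset.mem_Icc]
      omega
    rw [hfil]
    simp
  · rintro ⟨k, m⟩ hq
    by_contra hne
    apply hq
    have hS : 1 ≤ m := by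
      by_contra h
      exact hne (by simp [Set.indicator, S, h])
    have hm : m ≤ α k := by
      by_contra h
      exact hne (by simp [Set.indicator, f, h])
    have hk : k ∈ α.support := by
      rw [Finsupp.mem_support_iff]
      omega
    have hle : α k ≤ M := Finset.single_le_sum (f := fun k => α k) (fun _ _ => Nat.zero_le _) hk
    rw [Finset.mem_product, Finset.mem_range]
    exact ⟨hk, by simp only; omega⟩

lemma bzeta_mul (h1 : ∀ k, 1 < p k) (s : ℂ)
    (hs : Summable (fun α : ℕ →₀ ℕ => ‖(beurlingInt p α : ℂ) ^ (-s)‖))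
    (hL : Summable (fun q : {q : ℕ × ℕ // 1 ≤ q.2} =>
        ‖(Real.log (p (q : ℕ × ℕ).1) : ℂ) *
          (p (q : ℕ × ℕ).1 : ℂ) ^ (-((q : ℕ × ℕ).2 : ℂ) * s)‖)) :
    beurlingZeta p s * ∑' q : {q : ℕ × ℕ // 1 ≤ q.2},
          (Real.log (p (q : ℕ × ℕ).1) : ℂ) * (p (q : ℕ × ℕ).1 : ℂ) ^ (-((q : ℕ × ℕ).2 : ℂ) * s)
      = -beurlingZetaDeriv p s := by
  classical
  let Q := {q : ℕ × ℕ // 1 ≤ q.2}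
  let e : (ℕ →₀ ℕ) × Q → (ℕ →₀ ℕ) × Q := fun z => (Finsupp.single z.2.1.1 z.2.1.2 + z.1, z.2)
  have he : Function.Injective e := by
    rintro ⟨a, q⟩ ⟨b, r⟩ h
    simp only [e, Prod.mk.injEq] at h
    obtain ⟨h, rfl⟩ := h
    rw [add_left_cancel h]
  let G : (ℕ →₀ ℕ) × Q → ℂ := fun z =>
    (beurlingInt p z.1 : ℂ) ^ (-s) * (if z.2.1.2 ≤ z.1 z.2.1.1 then (Real.log (p z.2.1.1) : ℂ) else 0)
  have hrange : ∀ z, z ∉ Set.range e → G z = 0 := by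
    rintro ⟨α, q⟩ hz
    have : ¬ (q.1.2 ≤ α q.1.1) := by
      intro hle
      apply hz
      refine ⟨(α - Finsupp.single q.1.1 q.1.2, q), ?_⟩
      simp only [e, Prod.mk.injEq, and_true]
      apply add_tsub_cancel_of_le
      rwa [Finsupp.single_le_iff]
    simp [G, this]
  have hGe : ∀ z : (ℕ →₀ ℕ) × Q, G (e z) = (beurlingInt p z.1 : ℂ) ^ (-s) *
      ((Real.log (p z.2.1.1) : ℂ) * (p z.2.1.1 : ℂ) ^ (-(z.2.1.2 : ℂ) * s)) := by
    rintro ⟨α, q⟩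
    have hc : q.1.2 ≤ (Finsupp.single q.1.1 q.1.2 + α) q.1.1 := by simp
    simp only [G, e, hc, if_true]
    rw [bI_cadd h1, bI_csingle h1]
    ring
  have hsum : Summable G := by
    rw [← he.summable_iff hrange]
    refine (summable_mul_of_summable_norm hs hL).congr ?_
    intro z
    exact (hGe z).symm
  unfold beurlingZeta beurlingZetaDeriv
  rw [tsum_mul_tsum_of_summable_norm hs hL, neg_neg]
  calc _ = ∑' z, G (e z) := tsum_congr fun z => (hGe z).symm
    _ = ∑' z, G z := he.tsum_eq (fun z hz => by
        by_contra h
        exact hz (hrange z h))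
    _ = ∑' α, ∑' q, G (α, q) := hsum.tsum_prod
    _ = _ := by
      refine tsum_congr fun α => ?_
      simp only [G]
      rw [tsum_mul_left, mul_comm]
      congr 1
      exact bI_log_tsum h1 α

lemma bpsi_mellin (h1 : ∀ k, 1 < p k) (s : ℂ) (hs : 1 < s.re)
    (hL : Summable (fun q : {q : ℕ × ℕ // 1 ≤ q.2} =>
        ‖(Real.log (p (q : ℕ × ℕ).1) : ℂ) *
          (p (q : ℕ × ℕ).1 : ℂ) ^ (-((q : ℕ × ℕ).2 : ℂ) * s)‖)) :
    (∫ x in Set.Ioi (1 : ℝ), (beurlingPsi p x : ℂ) * (x : ℂ) ^ (-s - 1)) =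
      (∑' q : {q : ℕ × ℕ // 1 ≤ q.2},
          (Real.log (p (q : ℕ × ℕ).1) : ℂ) * (p (q : ℕ × ℕ).1 : ℂ) ^ (-((q : ℕ × ℕ).2 : ℂ) * s))
        / s := by
  classical
  let Q := {q : ℕ × ℕ // 1 ≤ q.2}
  have hre : (-s - 1).re < -1 := by
    simp only [Complex.sub_re, Complex.neg_re, Complex.one_re]
    linarith
  have hs0 : s ≠ 0 := by
    rintro rfl
    simp at hs
    linarith
  have hc1 : ∀ q : Q, 1 ≤ p q.1.1 ^ q.1.2 := fun q => one_le_pow₀ (h1 _).le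
  let F : Q → ℝ → ℂ := fun q => (Set.Ioi (p q.1.1 ^ q.1.2)).indicator
    (fun x : ℝ => (Real.log (p q.1.1) : ℂ) * (x : ℂ) ^ (-s - 1))
  have hinter : ∀ q : Q, Set.Ioi (1 : ℝ) ∩ Set.Ioi (p q.1.1 ^ q.1.2) = Set.Ioi (p q.1.1 ^ q.1.2) :=
    fun q => Set.inter_eq_right.mpr (Set.Ioi_subset_Ioi (hc1 q))
  have hint : ∀ q : Q, Integrable (F q) (volume.restrict (Set.Ioi 1)) := by
    intro q
    have h : IntegrableOn (fun x : ℝ => (Real.log (p q.1.1) : ℂ) * (x : ℂ) ^ (-s - 1))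
        (Set.Ioi (p q.1.1 ^ q.1.2)) :=
      (integrableOn_Ioi_cpow_of_lt hre (by linarith [hc1 q])).const_mul _
    exact ((integrable_indicator_iff measurableSet_Ioi).mpr h).restrict
  have hval : ∀ q : Q, ∫ x in Set.Ioi (1 : ℝ), F q x =
      (Real.log (p q.1.1) : ℂ) * (p q.1.1 : ℂ) ^ (-(q.1.2 : ℂ) * s) / s := by
    intro q
    simp only [F]
    rw [setIntegral_indicator measurableSet_Ioi, hinter, integral_const_mul,
      integral_Ioi_cpow_of_lt hre (by linarith [hc1 q]), ← bI_csingle h1, bI_single,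
      sub_add_cancel, neg_div_neg_eq, mul_div_assoc]
  have hnorm : ∀ q : Q, ∫ x in Set.Ioi (1 : ℝ), ‖F q x‖ =
      ‖(Real.log (p q.1.1) : ℂ) * (p q.1.1 : ℂ) ^ (-(q.1.2 : ℂ) * s)‖ / s.re := by
    intro q
    simp only [F, norm_indicator_eq_indicator_norm]
    rw [setIntegral_indicator measurableSet_Ioi, hinter, bL_norm h1]
    have h : Set.EqOn (fun x : ℝ => ‖(Real.log (p q.1.1) : ℂ) * (x : ℂ) ^ (-s - 1)‖)
        (fun x : ℝ => Real.log (p q.1.1) * x ^ (-s.re - 1)) (Set.Ioi (p q.1.1 ^ q.1.2)) := by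
      intro x hx
      have hx0 : 0 < x := by
        have := hc1 q
        have : p q.1.1 ^ q.1.2 < x := hx
        linarith
      simp only
      rw [norm_mul, Complex.norm_cpow_eq_rpow_re_of_pos hx0, Complex.norm_real, Real.norm_eq_abs,
        abs_of_nonneg (Real.log_nonneg (h1 _).le)]
      simp
    rw [setIntegral_congr_fun measurableSet_Ioi h, integral_const_mul,
      integral_Ioi_rpow_of_lt (by linarith) (by linarith [hc1 q]),
      sub_add_cancel, neg_div_neg_eq, mul_div_assoc]
  have hsumm : Summable fun q : Q => ∫ x in Set.Ioi (1 : ℝ), ‖F q x‖ := by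
    simp only [hnorm]
    exact hL.div_const _
  have hpsi : ∀ x : ℝ, (beurlingPsi p x : ℂ) * (x : ℂ) ^ (-s - 1) = ∑' q : Q, F q x := by
    intro x
    let S : Set (ℕ × ℕ) := {q | 1 ≤ q.2}
    let T : Set (ℕ × ℕ) := {q | 1 ≤ q.2 ∧ p q.1 ^ q.2 < x}
    let f : ℕ × ℕ → ℂ := fun q => (Real.log (p q.1) : ℂ) * (x : ℂ) ^ (-s - 1)
    let g : ℕ × ℕ → ℂ := fun q => (Set.Ioi (p q.1 ^ q.2)).indicator
      (fun x : ℝ => (Real.log (p q.1) : ℂ) * (x : ℂ) ^ (-s - 1)) x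
    have e1 : ∑' q : T, f q = ∑' q, T.indicator f q := tsum_subtype T f
    have e2 : ∑' q : S, g q = ∑' q, S.indicator g q := tsum_subtype S g
    have e3 : ∑' q : Q, F q x = ∑' q : S, g q := rfl
    have e4 : (beurlingPsi p x : ℂ) * (x : ℂ) ^ (-s - 1) = ∑' q : T, f q := by
      unfold beurlingPsi
      rw [Complex.ofReal_tsum, ← tsum_mul_right]
      rfl
    rw [e4, e3, e1, e2]
    refine tsum_congr fun q => ?_
    by_cases ha : 1 ≤ q.2 <;> by_cases hb : p q.1 ^ q.2 < x <;>
      simp [Set.indicator, S, T, f, g, ha, hb]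
  simp only [hpsi]
  rw [← integral_tsum_of_summable_integral_norm hint hsumm]
  simp only [hval]
  exact tsum_div_const

end BeurlingHelpers

/-- If `N(x) ≤ C x`, then for `Re s > 1` one has
`-ζ'(s)/ζ(s) = ∑_{k, m ≥ 1} log(p k) (p k)^{-ms}` (absolutely convergent) and
`∫₁^∞ ψ(x) x^{-s-1} dx = -ζ'(s)/(s ζ(s))`. -/
theorem log_deriv_zeta_and_psi_mellin
    (p : ℕ → ℝ) (hmono : Monotone p) (hp1 : 1 < p 0) (hptop : Tendsto p atTop atTop)
    (C : ℝ) (hC : ∀ x : ℝ, 1 ≤ x → (beurlingN p x : ℝ) ≤ C * x) :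
    ∀ s : ℂ, 1 < s.re →
      Summable (fun q : {q : ℕ × ℕ // 1 ≤ q.2} =>
        ‖(Real.log (p (q : ℕ × ℕ).1) : ℂ) * (p (q : ℕ × ℕ).1 : ℂ) ^ (-((q : ℕ × ℕ).2 : ℂ) * s)‖) ∧
      -beurlingZetaDeriv p s / beurlingZeta p s =
        ∑' q : {q : ℕ × ℕ // 1 ≤ q.2},
          (Real.log (p (q : ℕ × ℕ).1) : ℂ) * (p (q : ℕ × ℕ).1 : ℂ) ^ (-((q : ℕ × ℕ).2 : ℂ) * s) ∧
      (∫ x in Set.Ioi (1 : ℝ), (beurlingPsi p x : ℂ) * (x : ℂ) ^ (-s - 1)) =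
        -beurlingZetaDeriv p s / (s * beurlingZeta p s) := by
  intro s hs
  have h1 : ∀ k, 1 < p k := fun k => lt_of_lt_of_le hp1 (hmono (Nat.zero_le k))
  have hS : Summable (fun α : ℕ →₀ ℕ => ‖(beurlingInt p α : ℂ) ^ (-s)‖) := by
    simp only [bI_norm h1]
    exact bI_summable h1 hmono hptop C hC s.re hs
  have hL := bL_summable h1 s (bI_summable_log h1 hmono hptop C hC s.re hs)
  have hz := bzeta_ne_zero h1 s hS
  have hm := bzeta_mul h1 s hS hL
  refine ⟨hL, ?_, ?_⟩
  · rw [← hm, mul_div_cancel_left₀ _ hz]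
  · rw [bpsi_mellin h1 s hs hL, ← hm, mul_comm s, mul_div_mul_left _ _ hz]
end

section
/- Suppose a > 0 and N(x) ≤ C·x for all x ≥ 1. Define E₁(u) = e^{−u} N(e^u) − a for u > 0, E₁(u) = 0 for u ≤ 0, and E₂(u) = u·E₁(u). Write L₁(s) = ∫₀^∞ E₁(u) e^{−(s−1)u} du and L₂(s) = ∫₀^∞ E₂(u) e^{−(s−1)u} du. Then for every complex s with Re s > 1 (where ζ(s) ≠ 0): −ζ'(s)/(s ζ(s)) = L₂(s)/ζ(s) − ((2s − 1) L₁(s) + a)/(s (s − 1) ζ(s)) − 1/s + 1/(s − 1). -/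
open MeasureTheory Real Filter Complex

/-- The error term `E₁(u) = e^{-u} N(e^u) - a` for `u > 0`, and `0` for `u ≤ 0`. -/
noncomputable def beurlingE₁ (p : ℕ → ℝ) (a : ℝ) (u : ℝ) : ℝ :=
  if 0 < u then Real.exp (-u) * (beurlingN p (Real.exp u) : ℝ) - a else 0

/-- `E₂(u) = u E₁(u)`. -/
noncomputable def beurlingE₂ (p : ℕ → ℝ) (a : ℝ) (u : ℝ) : ℝ := u * beurlingE₁ p a u

theorem bInt_one_le (p : ℕ → ℝ) (hmono : Monotone p) (hp1 : 1 < p 0) (α : ℕ →₀ ℕ) :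
    1 ≤ beurlingInt p α := by
  unfold beurlingInt Finsupp.prod
  refine Finset.prod_induction _ (fun x : ℝ => 1 ≤ x)
    (fun x y hx hy => one_le_mul_of_one_le_of_one_le hx hy) le_rfl fun k _ => one_le_pow₀ ?_
  exact hp1.le.trans (hmono (Nat.zero_le k))

theorem bInt_pos (p : ℕ → ℝ) (hmono : Monotone p) (hp1 : 1 < p 0) (α : ℕ →₀ ℕ) :
    0 < beurlingInt p α := lt_of_lt_of_le one_pos (bInt_one_le p hmono hp1 α)

theorem bInt_add (p : ℕ → ℝ) (α β : ℕ →₀ ℕ) :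
    beurlingInt p (α + β) = beurlingInt p α * beurlingInt p β := by
  unfold beurlingInt
  exact Finsupp.prod_add_index' (by simp) (fun k a b => pow_add _ _ _)

theorem bInt_single (p : ℕ → ℝ) (k e : ℕ) :
    beurlingInt p (Finsupp.single k e) = p k ^ e := by
  unfold beurlingInt
  exact Finsupp.prod_single_index (by simp)

theorem bInt_pow_le (p : ℕ → ℝ) (hmono : Monotone p) (hp1 : 1 < p 0) (α : ℕ →₀ ℕ) (k : ℕ) :
    p k ^ (α k) ≤ beurlingInt p α := by
  have h : α = Finsupp.single k (α k) + α.erase k := (Finsupp.single_add_erase k α).symm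
  have h2 : beurlingInt p α = p k ^ (α k) * beurlingInt p (α.erase k) := by
    conv_lhs => rw [h]
    rw [bInt_add, bInt_single]
  rw [h2]
  have := bInt_one_le p hmono hp1 (α.erase k)
  have h0 : 0 ≤ p k := by linarith [hmono (Nat.zero_le k)]
  exact le_mul_of_one_le_right (pow_nonneg h0 _) this

theorem bInt_finite (p : ℕ → ℝ) (hmono : Monotone p) (hp1 : 1 < p 0)
    (hptop : Tendsto p atTop atTop) (x : ℝ) : {α : ℕ →₀ ℕ | beurlingInt p α < x}.Finite := by
  obtain ⟨K, hK⟩ := (hptop.eventually_ge_atTop x).exists_forall_of_atTop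
  obtain ⟨M, hM⟩ := pow_unbounded_of_one_lt x hp1
  refine (Set.finite_Iic (∑ k ∈ Finset.range K, Finsupp.single k M)).subset ?_
  intro α hα
  replace hα : beurlingInt p α < x := hα
  rw [Set.mem_Iic, Finsupp.le_def]
  intro k
  have hk := bInt_pow_le p hmono hp1 α k
  have h0 : 1 < p k := hp1.trans_le (hmono (Nat.zero_le k))
  rw [Finsupp.finsetSum_apply]
  by_cases hkK : k < K
  · have : ∑ i ∈ Finset.range K, (Finsupp.single i M : ℕ →₀ ℕ) k = M := by
      rw [Finset.sum_eq_single k]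
      · simp
      · intro b _ hb; simp [hb]
      · intro h; simp [hkK] at h
    rw [this]
    by_contra! hcon
    have h1 : p 0 ^ M ≤ p k ^ (α k) :=
      (pow_le_pow_left₀ (by linarith) (hmono (Nat.zero_le k)) M).trans
        (pow_le_pow_right₀ h0.le hcon.le)
    linarith
  · have : α k = 0 := by
      by_contra hne
      have h1 : p k ≤ p k ^ (α k) := le_self_pow₀ h0.le hne
      linarith [hK k (not_lt.mp hkK)]
    rw [this]; exact Nat.zero_le _

theorem bN_mono (p : ℕ → ℝ) (hmono : Monotone p) (hp1 : 1 < p 0)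
    (hptop : Tendsto p atTop atTop) : Monotone (beurlingN p) := by
  intro x y hxy
  exact Set.ncard_le_ncard (fun α hα => lt_of_lt_of_le hα hxy) (bInt_finite p hmono hp1 hptop y)

theorem bN_tsum (p : ℕ → ℝ) (hmono : Monotone p) (hp1 : 1 < p 0)
    (hptop : Tendsto p atTop atTop) (u : ℝ) (z : ℂ) :
    ∑' α : ℕ →₀ ℕ, (Set.Ioi (Real.log (beurlingInt p α))).indicator (fun _ => z) u
      = (beurlingN p (Real.exp u) : ℂ) * z := by
  have hfin := bInt_finite p hmono hp1 hptop (Real.exp u)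
  rw [tsum_eq_sum (s := hfin.toFinset)]
  · rw [Finset.sum_congr rfl (g := fun _ => z), Finset.sum_const, nsmul_eq_mul, beurlingN,
      Set.ncard_eq_toFinset_card _ hfin]
    intro α hα
    rw [Set.Finite.mem_toFinset] at hα
    exact Set.indicator_of_mem
      (by exact (Real.log_lt_iff_lt_exp (bInt_pos p hmono hp1 α)).2 hα) _
  · intro α hα
    rw [Set.Finite.mem_toFinset] at hα
    exact Set.indicator_of_notMem
      (fun h => hα ((Real.log_lt_iff_lt_exp (bInt_pos p hmono hp1 α)).1 h)) _

theorem bN_finsum (p : ℕ → ℝ) (hmono : Monotone p) (hp1 : 1 < p 0)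
    (hptop : Tendsto p atTop atTop) (u : ℝ) (z : ℝ) (hz : 0 ≤ z) (F : Finset (ℕ →₀ ℕ)) :
    ∑ α ∈ F, (Set.Ioi (Real.log (beurlingInt p α))).indicator (fun _ => z) u
      ≤ (beurlingN p (Real.exp u) : ℝ) * z := by
  classical
  have hfin := bInt_finite p hmono hp1 hptop (Real.exp u)
  have h1 : ∑ α ∈ F, (Set.Ioi (Real.log (beurlingInt p α))).indicator (fun _ => z) u
      = ∑ α ∈ F with beurlingInt p α < Real.exp u, z := by
    rw [Finset.sum_filter]
    refine Finset.sum_congr rfl fun α _ => ?_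
    simp [Set.indicator_apply, Real.log_lt_iff_lt_exp (bInt_pos p hmono hp1 α)]
  rw [h1, Finset.sum_const, nsmul_eq_mul]
  refine mul_le_mul_of_nonneg_right ?_ hz
  rw [beurlingN, Set.ncard_eq_toFinset_card _ hfin]
  exact_mod_cast Finset.card_le_card (fun α hα => by
    simpa using (Finset.mem_filter.1 hα).2)

theorem summable_exp (p : ℕ → ℝ) (hmono : Monotone p) (hp1 : 1 < p 0)
    (hptop : Tendsto p atTop atTop)
    (C : ℝ) (hC : ∀ x : ℝ, 1 ≤ x → (beurlingN p x : ℝ) ≤ C * x) (t : ℝ) (ht : 1 < t) :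
    Summable fun α => ∫ u in Set.Ioi (Real.log (beurlingInt p α)), Real.exp (-t * u) := by
  have hlog : ∀ α, 0 ≤ Real.log (beurlingInt p α) := fun α =>
    Real.log_nonneg (bInt_one_le p hmono hp1 α)
  refine summable_of_sum_le (c := ∫ u in Set.Ioi (0:ℝ), C * Real.exp (-(t - 1) * u))
    (fun α => setIntegral_nonneg measurableSet_Ioi fun u _ => (Real.exp_pos _).le) ?_
  intro F
  have hint : IntegrableOn (fun u : ℝ => Real.exp (-t * u)) (Set.Ioi 0) :=
    integrableOn_exp_mul_Ioi (by linarith) 0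
  have h1 : ∀ α, ∫ u in Set.Ioi (Real.log (beurlingInt p α)), Real.exp (-t * u)
      = ∫ u in Set.Ioi (0:ℝ), (Set.Ioi (Real.log (beurlingInt p α))).indicator
          (fun u => Real.exp (-t * u)) u := by
    intro α
    rw [setIntegral_indicator measurableSet_Ioi, Set.Ioi_inter_Ioi, sup_eq_right.2 (hlog α)]
  simp_rw [h1]
  rw [← integral_finsetSum _ (fun α _ => hint.indicator measurableSet_Ioi)]
  refine setIntegral_mono_on ?_ ?_ measurableSet_Ioi ?_
  · exact integrable_finsetSum _ (fun α _ => hint.indicator measurableSet_Ioi)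
  · exact (integrableOn_exp_mul_Ioi (by linarith) 0).const_mul C
  · intro u hu
    have h2 := bN_finsum p hmono hp1 hptop u (Real.exp (-t * u)) (Real.exp_pos _).le F
    refine (le_of_eq ?_).trans (h2.trans ?_)
    · rfl
    · have := hC (Real.exp u) (Real.one_le_exp (le_of_lt hu))
      calc _ ≤ C * Real.exp u * Real.exp (-t * u) :=
            mul_le_mul_of_nonneg_right this (Real.exp_pos _).le
        _ = _ := by rw [mul_assoc, ← Real.exp_add]; ring_nf

theorem hasSum_main (p : ℕ → ℝ) (hmono : Monotone p) (hp1 : 1 < p 0)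
    (hptop : Tendsto p atTop atTop)
    (C : ℝ) (hC : ∀ x : ℝ, 1 ≤ x → (beurlingN p x : ℝ) ≤ C * x) (t : ℝ) (ht : 1 < t)
    (M : ℝ) (h : ℝ → ℂ) (hcont : Continuous h)
    (hb : ∀ u : ℝ, 0 < u → ‖h u‖ ≤ M * Real.exp (-t * u)) :
    IntegrableOn (fun u => (beurlingN p (Real.exp u) : ℂ) * h u) (Set.Ioi 0) ∧
    HasSum (fun α => ∫ u in Set.Ioi (Real.log (beurlingInt p α)), h u)
      (∫ u in Set.Ioi (0:ℝ), (beurlingN p (Real.exp u) : ℂ) * h u) := by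
  have hlog : ∀ α, 0 ≤ Real.log (beurlingInt p α) := fun α =>
    Real.log_nonneg (bInt_one_le p hmono hp1 α)
  have hM : 0 ≤ M := by
    have := (norm_nonneg _).trans (hb 1 one_pos)
    exact nonneg_of_mul_nonneg_left this (Real.exp_pos _)
  have hexp : ∀ c : ℝ, IntegrableOn (fun u : ℝ => M * Real.exp (-t * u)) (Set.Ioi c) := fun c =>
    (integrableOn_exp_mul_Ioi (by linarith) c).const_mul M
  have hint : IntegrableOn h (Set.Ioi 0) := by
    refine (hexp 0).mono' hcont.aestronglyMeasurable ?_
    exact (ae_restrict_mem measurableSet_Ioi).mono fun u hu => hb u hu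
  constructor
  · have hmeas : Measurable fun u : ℝ => (beurlingN p (Real.exp u) : ℂ) :=
      (measurable_from_nat (f := fun n : ℕ => (n : ℂ))).comp
        ((bN_mono p hmono hp1 hptop).comp Real.exp_monotone).measurable
    refine Integrable.mono' (g := fun u => C * M * Real.exp (-(t - 1) * u))
      ((integrableOn_exp_mul_Ioi (by linarith) 0).const_mul (C * M))
      (hmeas.mul hcont.measurable).aestronglyMeasurable ?_
    refine (ae_restrict_mem measurableSet_Ioi).mono fun u hu => ?_
    rw [norm_mul, Complex.norm_natCast]
    have h1 := hC (Real.exp u) (Real.one_le_exp (le_of_lt hu))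
    calc _ ≤ (C * Real.exp u) * (M * Real.exp (-t * u)) :=
          mul_le_mul h1 (hb u hu) (norm_nonneg _) ((Nat.cast_nonneg _).trans h1)
      _ = C * M * (Real.exp u * Real.exp (-t * u)) := by ring
      _ = _ := by rw [← Real.exp_add]; ring_nf
  · have key := hasSum_integral_of_summable_integral_norm (μ := volume.restrict (Set.Ioi (0:ℝ)))
      (F := fun α u => (Set.Ioi (Real.log (beurlingInt p α))).indicator h u)
      (fun α => hint.indicator measurableSet_Ioi) ?_
    · have h1 : ∀ α, ∫ u in Set.Ioi (Real.log (beurlingInt p α)), h u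
        = ∫ u in Set.Ioi (0:ℝ), (Set.Ioi (Real.log (beurlingInt p α))).indicator h u := by
        intro α
        rw [setIntegral_indicator measurableSet_Ioi, Set.Ioi_inter_Ioi, sup_eq_right.2 (hlog α)]
      simp_rw [h1]
      have h2 : (fun u => (beurlingN p (Real.exp u) : ℂ) * h u) = fun u =>
          ∑' α : ℕ →₀ ℕ, (Set.Ioi (Real.log (beurlingInt p α))).indicator h u :=
        funext fun u => (bN_tsum p hmono hp1 hptop u (h u)).symm
      rw [h2]
      exact key
    · refine Summable.of_nonneg_of_le (fun α => integral_nonneg fun u => norm_nonneg _) ?_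
        ((summable_exp p hmono hp1 hptop C hC t ht).mul_left M)
      intro α
      simp_rw [norm_indicator_eq_indicator_norm]
      rw [setIntegral_indicator measurableSet_Ioi, Set.Ioi_inter_Ioi, sup_eq_right.2 (hlog α),
        ← integral_const_mul]
      refine setIntegral_mono_on ?_ (hexp _) measurableSet_Ioi ?_
      · exact (hint.mono_set (Set.Ioi_subset_Ioi (hlog α))).norm
      · exact fun u hu => hb u ((hlog α).trans_lt hu)

theorem norm_exp_neg (z : ℂ) (u : ℝ) : ‖Complex.exp (-z * u)‖ = Real.exp (-z.re * u) := by
  rw [Complex.norm_exp]; simp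

theorem norm_mul_exp_le (z : ℂ) (e : ℝ) (he : 0 < e) (u : ℝ) (hu : 0 < u) :
    ‖(u : ℂ) * Complex.exp (-z * u)‖ ≤ e⁻¹ * Real.exp (-(z.re - e) * u) := by
  rw [norm_mul, norm_exp_neg, Complex.norm_real, Real.norm_of_nonneg hu.le]
  have h1 : e * u ≤ Real.exp (e * u) := by linarith [Real.add_one_le_exp (e * u)]
  have h2 : Real.exp (-(z.re - e) * u) = Real.exp (e * u) * Real.exp (-z.re * u) := by
    rw [← Real.exp_add]; ring_nf
  rw [h2, ← mul_assoc]
  refine mul_le_mul_of_nonneg_right ?_ (Real.exp_pos _).le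
  rw [inv_mul_eq_div, le_div_iff₀ he]; linarith

theorem int_mul_exp (z : ℂ) (hz : 0 < z.re) (c : ℝ) (hc : 0 ≤ c) :
    IntegrableOn (fun u : ℝ => (u : ℂ) * Complex.exp (-z * u)) (Set.Ioi c) ∧
    ∫ u in Set.Ioi c, (u : ℂ) * Complex.exp (-z * u)
      = (c / z + 1 / z ^ 2) * Complex.exp (-z * c) := by
  have hz0 : z ≠ 0 := by rintro rfl; simp at hz
  have hint : IntegrableOn (fun u : ℝ => (u : ℂ) * Complex.exp (-z * u)) (Set.Ioi c) := by
    refine Integrable.mono' (g := fun u => (z.re / 2)⁻¹ * Real.exp (-(z.re - z.re / 2) * u))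
      ((integrableOn_exp_mul_Ioi (by linarith) c).const_mul _)
      (by fun_prop) ?_
    exact (ae_restrict_mem measurableSet_Ioi).mono fun u hu =>
      norm_mul_exp_le z _ (by linarith) u (hc.trans_lt hu)
  refine ⟨hint, ?_⟩
  have hd : ∀ x ∈ Set.Ici c, HasDerivAt
      (fun u : ℝ => -((u : ℂ) / z + 1 / z ^ 2) * Complex.exp (-z * u))
      ((x : ℂ) * Complex.exp (-z * x)) x := by
    intro x _
    have h0 : HasDerivAt (fun u : ℝ => (u : ℂ)) 1 x := Complex.ofRealCLM.hasDerivAt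
    have h1 := ((h0.div_const z).add_const (1 / z ^ 2)).neg
    have h2 := (h0.const_mul (-z)).cexp
    refine (h1.mul h2).congr_deriv ?_
    simp only [Pi.neg_apply]
    field_simp
    ring
  have ht : Tendsto (fun u : ℝ => -((u : ℂ) / z + 1 / z ^ 2) * Complex.exp (-z * u)) atTop
      (nhds 0) := by
    have hlim : ∀ b : ℝ, 0 < b → Tendsto (fun u : ℝ => Real.exp (-b * u)) atTop (nhds 0) := by
      intro b hb
      refine Real.tendsto_exp_atBot.comp ?_
      exact tendsto_id.const_mul_atTop_of_neg (by linarith)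
    have t1 : Tendsto (fun u : ℝ => (u : ℂ) * Complex.exp (-z * u)) atTop (nhds 0) := by
      refine squeeze_zero_norm' (a := fun u => (z.re / 2)⁻¹ * Real.exp (-(z.re - z.re / 2) * u))
        ?_ ?_
      · filter_upwards [eventually_gt_atTop 0] with u hu
        exact norm_mul_exp_le z _ (by linarith) u hu
      · simpa using (hlim (z.re - z.re / 2) (by linarith)).const_mul (z.re / 2)⁻¹
    have t2 : Tendsto (fun u : ℝ => Complex.exp (-z * u)) atTop (nhds 0) := by
      rw [tendsto_zero_iff_norm_tendsto_zero]
      simp_rw [norm_exp_neg]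
      exact hlim _ hz
    have t3 := (t1.const_mul (-1 / z)).add (t2.const_mul (-1 / z ^ 2))
    simp only [mul_zero, add_zero] at t3
    refine t3.congr fun u => ?_
    ring
  rw [integral_Ioi_of_hasDerivAt_of_tendsto' hd hint ht]
  ring

theorem cpow_eq_exp (p : ℕ → ℝ) (hmono : Monotone p) (hp1 : 1 < p 0) (α : ℕ →₀ ℕ) (s : ℂ) :
    (beurlingInt p α : ℂ) ^ (-s) = Complex.exp (-s * (Real.log (beurlingInt p α) : ℝ)) := by
  have h := bInt_pos p hmono hp1 α
  rw [Complex.cpow_def_of_ne_zero (by exact_mod_cast h.ne'), Complex.ofReal_log h.le, mul_comm]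

/-- Partial zeta: the sum over generalized integers with no factor `p k`, `k < K`. -/
noncomputable def zpart (p : ℕ → ℝ) (s : ℂ) (K : ℕ) : ℂ :=
  ∑' α : ℕ →₀ ℕ, {α : ℕ →₀ ℕ | ∀ k < K, α k = 0}.indicator
    (fun α => (beurlingInt p α : ℂ) ^ (-s)) α

theorem zpart_succ (p : ℕ → ℝ) (hmono : Monotone p) (hp1 : 1 < p 0) (s : ℂ)
    (hs : Summable fun α : ℕ →₀ ℕ => (beurlingInt p α : ℂ) ^ (-s)) (K : ℕ) :
    zpart p s (K + 1) = (1 - (p K : ℂ) ^ (-s)) * zpart p s K := by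
  set f : (ℕ →₀ ℕ) → ℂ := fun α => (beurlingInt p α : ℂ) ^ (-s) with hf
  set A : Set (ℕ →₀ ℕ) := {α | ∀ k < K, α k = 0} with hA
  set A' : Set (ℕ →₀ ℕ) := {α | ∀ k < K + 1, α k = 0} with hA'
  set B : Set (ℕ →₀ ℕ) := {α | (∀ k < K, α k = 0) ∧ α K ≠ 0} with hB
  have h1 : ∀ α, A.indicator f α = A'.indicator f α + B.indicator f α := by
    intro α
    by_cases h : α ∈ A
    · by_cases h0 : α K = 0
      · have ha : α ∈ A' := by
          intro k hk
          rcases Nat.lt_succ_iff_lt_or_eq.1 hk with h' | rfl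
          · exact h k h'
          · exact h0
        have hb : α ∉ B := fun hb => hb.2 h0
        simp [h, ha, hb]
      · have ha : α ∉ A' := fun ha => h0 (ha K (Nat.lt_succ_self K))
        have hb : α ∈ B := ⟨h, h0⟩
        simp [h, ha, hb]
    · have ha : α ∉ A' := fun ha => h fun k hk => ha k (hk.trans (Nat.lt_succ_self K))
      have hb : α ∉ B := fun hb => h hb.1
      simp [h, ha, hb]
  have h2 : ∑' α, B.indicator f α = (p K : ℂ) ^ (-s) * ∑' α, A.indicator f α := by
    have hinj : Function.Injective fun α : ℕ →₀ ℕ => α + Finsupp.single K 1 :=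
      add_left_injective _
    rw [← hinj.tsum_eq (f := B.indicator f), ← tsum_mul_left]
    · refine tsum_congr fun α => ?_
      have hiff : α + Finsupp.single K 1 ∈ B ↔ α ∈ A := by
        constructor
        · intro h k hk
          have := h.1 k hk
          simp at this
          exact this.1
        · intro h
          refine ⟨fun k hk => ?_, by simp⟩
          have : K ≠ k := hk.ne'
          simp [this.symm, h k hk]
      by_cases h : α ∈ A
      · rw [Set.indicator_of_mem (hiff.2 h), Set.indicator_of_mem h]
        simp only [hf]
        rw [bInt_add, bInt_single, pow_one, Complex.ofReal_mul,
          Complex.mul_cpow_ofReal_nonneg (bInt_pos p hmono hp1 α).le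
            (by linarith [hmono (Nat.zero_le K)]), mul_comm]
      · rw [Set.indicator_of_notMem (fun hb => h (hiff.1 hb)), Set.indicator_of_notMem h, mul_zero]
    · intro α hα
      have hb : α ∈ B := by
        by_contra hb
        exact hα (Set.indicator_of_notMem hb f)
      refine ⟨α - Finsupp.single K 1, ?_⟩
      refine tsub_add_cancel_of_le ?_
      rw [Finsupp.single_le_iff]
      exact Nat.one_le_iff_ne_zero.2 hb.2
  have h3 : ∑' α, A.indicator f α = ∑' α, A'.indicator f α + ∑' α, B.indicator f α := by
    rw [← Summable.tsum_add (hs.indicator _) (hs.indicator _)]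
    exact tsum_congr h1
  show ∑' α, A'.indicator f α = (1 - (p K : ℂ) ^ (-s)) * ∑' α, A.indicator f α
  rw [h2] at h3
  linear_combination -h3

theorem zeta_ne_zero (p : ℕ → ℝ) (hmono : Monotone p) (hp1 : 1 < p 0) (s : ℂ)
    (hs : Summable fun α : ℕ →₀ ℕ => (beurlingInt p α : ℂ) ^ (-s)) :
    beurlingZeta p s ≠ 0 := by
  intro h0
  have hz : ∀ K, zpart p s K = 0 := by
    intro K
    induction K with
    | zero => simpa [zpart, beurlingZeta] using h0
    | succ K ih => rw [zpart_succ p hmono hp1 s hs, ih, mul_zero]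
  have hlim : Tendsto (zpart p s) atTop (nhds (∑' α : ℕ →₀ ℕ, if α = 0 then (1:ℂ) else 0)) := by
    refine tendsto_tsum_of_dominated_convergence hs.norm ?_ ?_
    · intro α
      by_cases hα : α = 0
      · subst hα
        simp [beurlingInt]
      · simp only [hα, if_false]
        obtain ⟨k, hk⟩ := Finsupp.ne_iff.1 hα
        refine tendsto_const_nhds.congr' ?_
        filter_upwards [eventually_gt_atTop k] with K hK
        rw [Set.indicator_of_notMem]
        exact fun h => hk (h k hK)
    · exact Eventually.of_forall fun K α => norm_indicator_le_norm_self _ _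
  rw [tsum_ite_eq] at hlim
  have := tendsto_nhds_unique hlim (by simp_rw [funext hz]; exact tendsto_const_nhds)
  exact one_ne_zero this

/-- The key identity (11) of the paper: with
`L₁(s) = ∫₀^∞ E₁(u) e^{-(s-1)u} du` and `L₂(s) = ∫₀^∞ E₂(u) e^{-(s-1)u} du`, for `Re s > 1`
 one has `-ζ'(s)/(sζ(s)) = L₂(s)/ζ(s) - ((2s-1)L₁(s) + a)/(s(s-1)ζ(s)) - 1/s + 1/(s-1)`. -/
theorem key_identity
    (p : ℕ → ℝ) (hmono : Monotone p) (hp1 : 1 < p 0) (hptop : Tendsto p atTop atTop)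
    (a : ℝ) (ha : 0 < a)
    (C : ℝ) (hC : ∀ x : ℝ, 1 ≤ x → (beurlingN p x : ℝ) ≤ C * x) :
    ∀ s : ℂ, 1 < s.re →
      -beurlingZetaDeriv p s / (s * beurlingZeta p s) =
        (∫ u in Set.Ioi (0 : ℝ), (beurlingE₂ p a u : ℂ) * Complex.exp (-(s - 1) * u)) /
            beurlingZeta p s -
          ((2 * s - 1) *
              (∫ u in Set.Ioi (0 : ℝ), (beurlingE₁ p a u : ℂ) * Complex.exp (-(s - 1) * u)) + a) /
            (s * (s - 1) * beurlingZeta p s) -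
          1 / s + 1 / (s - 1) := by
  intro s hs
  have hs0 : s ≠ 0 := by rintro rfl; simp at hs; linarith
  have hs1 : s - 1 ≠ 0 := by
    intro h
    have : s = 1 := sub_eq_zero.1 h
    rw [this] at hs; simp at hs
  have hre1 : 0 < (s - 1).re := by simp; linarith
  have hlog : ∀ α, 0 ≤ Real.log (beurlingInt p α) := fun α =>
    Real.log_nonneg (bInt_one_le p hmono hp1 α)
  obtain ⟨i1, H1⟩ := hasSum_main p hmono hp1 hptop C hC s.re hs 1
    (fun u => Complex.exp (-s * u)) (by fun_prop) (fun u _ => by rw [norm_exp_neg, one_mul])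
  obtain ⟨i2, H2⟩ := hasSum_main p hmono hp1 hptop C hC (s.re - (s.re - 1) / 2) (by linarith)
    ((s.re - 1) / 2)⁻¹
    (fun u => (u : ℂ) * Complex.exp (-s * u)) (by fun_prop)
    (fun u hu => norm_mul_exp_le s _ (by linarith) u hu)
  set I1 := ∫ u in Set.Ioi (0:ℝ), (beurlingN p (Real.exp u) : ℂ) * Complex.exp (-s * u) with hI1
  set I2 := ∫ u in Set.Ioi (0:ℝ),
    (beurlingN p (Real.exp u) : ℂ) * ((u : ℂ) * Complex.exp (-s * u)) with hI2
  have S1 : HasSum (fun α : ℕ →₀ ℕ => (beurlingInt p α : ℂ) ^ (-s)) (s * I1) := by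
    refine (H1.mul_left s).congr_fun fun α => ?_
    rw [integral_exp_mul_complex_Ioi (by simp; linarith), cpow_eq_exp p hmono hp1]
    field_simp
  have S2 : HasSum (fun α : ℕ →₀ ℕ => (Real.log (beurlingInt p α) : ℂ) *
      (beurlingInt p α : ℂ) ^ (-s)) (s * I2 - s⁻¹ * (s * I1)) := by
    refine ((H2.mul_left s).sub (S1.mul_left s⁻¹)).congr_fun fun α => ?_
    rw [(int_mul_exp s (by linarith) _ (hlog α)).2, cpow_eq_exp p hmono hp1]
    field_simp
    ring
  have hZ : beurlingZeta p s = s * I1 := S1.tsum_eq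
  have hZ' : beurlingZetaDeriv p s = -(s * I2 - s⁻¹ * (s * I1)) := by
    rw [beurlingZetaDeriv, S2.tsum_eq]
  have hZ0 : beurlingZeta p s ≠ 0 := zeta_ne_zero p hmono hp1 s S1.summable
  have hexp : ∀ u : ℝ, (Real.exp (-u) : ℂ) * Complex.exp (-(s - 1) * u)
      = Complex.exp (-s * u) := by
    intro u
    rw [Complex.ofReal_exp, ← Complex.exp_add]
    congr 1; push_cast; ring
  have L1 : ∫ u in Set.Ioi (0 : ℝ), (beurlingE₁ p a u : ℂ) * Complex.exp (-(s - 1) * u)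
      = I1 - a / (s - 1) := by
    have hi := (integrableOn_exp_mul_complex_Ioi (a := -(s - 1)) (by simpa using hre1) 0).const_mul
      (a : ℂ)
    have he : ∫ u in Set.Ioi (0:ℝ), (a : ℂ) * Complex.exp (-(s - 1) * u) = a / (s - 1) := by
      rw [integral_const_mul, integral_exp_mul_complex_Ioi (by simpa using hre1)]
      simp only [Complex.ofReal_zero, mul_zero, Complex.exp_zero]
      rw [neg_div_neg_eq]; ring
    rw [← he, hI1, ← integral_sub i1 hi]
    refine setIntegral_congr_fun measurableSet_Ioi fun u hu => ?_
    simp only [beurlingE₁, if_pos (Set.mem_Ioi.1 hu)]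
    rw [← hexp u]; push_cast; ring
  have L2 : ∫ u in Set.Ioi (0 : ℝ), (beurlingE₂ p a u : ℂ) * Complex.exp (-(s - 1) * u)
      = I2 - a / (s - 1) ^ 2 := by
    obtain ⟨j1, j2⟩ := int_mul_exp (s - 1) hre1 0 le_rfl
    have hi := j1.const_mul (a : ℂ)
    have he : ∫ u in Set.Ioi (0:ℝ), (a : ℂ) * ((u : ℂ) * Complex.exp (-(s - 1) * u))
        = a / (s - 1) ^ 2 := by
      rw [integral_const_mul, j2]
      simp only [Complex.ofReal_zero, mul_zero, Complex.exp_zero]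
      ring
    rw [← he, hI2, ← integral_sub i2 hi]
    refine setIntegral_congr_fun measurableSet_Ioi fun u hu => ?_
    simp only [beurlingE₂, beurlingE₁, if_pos (Set.mem_Ioi.1 hu)]
    rw [← hexp u]; push_cast; ring
  rw [L1, L2, hZ']
  rw [hZ] at hZ0 ⊢
  have hI0 : I1 ≠ 0 := right_ne_zero_of_mul hZ0
  clear_value I1 I2
  field_simp
  ring
end

section
/- Suppose a > 0 and the function E₁ defined by E₁(u) = e^{−u} N(e^u) − a for u > 0 and E₁(u) = 0 for u ≤ 0 is integrable on ℝ; let Ê₁(t) = ∫_ℝ E₁(u) e^{−itu} du, and let c > 0 be such that (1 + it)(it Ê₁(t) + a) ≠ 0 for all |t| < 3c. Then for every smooth compactly supported φ : ℝ → ℂ with support contained in (−c, c), there exists an integrable function f : ℝ → ℂ such that its Fourier transform f̂(t) = ∫_ℝ f(u) e^{−itu} du satisfies f̂(t) · (1 + it)(it Ê₁(t) + a) = φ(t) for all |t| < c, and f̂(t) = 0 for |t| ≥ c. -/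
open MeasureTheory Real Filter Complex

/-- Fourier transform `Ê₁(t) = ∫ E₁(u) e^{-itu} du`. -/
noncomputable def beurlingE₁FT (p : ℕ → ℝ) (a : ℝ) (t : ℝ) : ℂ :=
  ∫ u : ℝ, (beurlingE₁ p a u : ℂ) * Complex.exp (-Complex.I * t * u)

/-- Fourier transform with the convention of the statement. -/
noncomputable def wFT (f : ℝ → ℂ) (t : ℝ) : ℂ :=
  ∫ u : ℝ, f u * Complex.exp (-Complex.I * t * u)

/-- `F` is the Fourier transform of an `L¹` function of norm at most `C`. -/
def InA (F : ℝ → ℂ) (C : ℝ) : Prop :=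
  ∃ f : ℝ → ℂ, Integrable f ∧ (∫ u, ‖f u‖) ≤ C ∧ ∀ t, wFT f t = F t

lemma norm_expI (t u : ℝ) : ‖Complex.exp (-Complex.I * t * u)‖ = 1 := by
  have : -Complex.I * t * u = ((-(t * u) : ℝ) : ℂ) * Complex.I := by push_cast; ring
  rw [this, Complex.norm_exp_ofReal_mul_I]

lemma integrable_mul_expI {f : ℝ → ℂ} (hf : Integrable f) (t : ℝ) :
    Integrable (fun u : ℝ => f u * Complex.exp (-Complex.I * t * u)) := by
  refine hf.mono (hf.1.mul (by fun_prop)) ?_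
  filter_upwards with u
  rw [norm_mul, norm_expI, mul_one]

lemma wFT_norm_le (f : ℝ → ℂ) (t : ℝ) : ‖wFT f t‖ ≤ ∫ u, ‖f u‖ := by
  unfold wFT
  refine (norm_integral_le_integral_norm _).trans (le_of_eq ?_)
  congr 1; ext u
  rw [norm_mul, norm_expI, mul_one]

lemma wFT_sub {f g : ℝ → ℂ} (hf : Integrable f) (hg : Integrable g) (t : ℝ) :
    wFT (fun u => f u - g u) t = wFT f t - wFT g t := by
  unfold wFT
  rw [← integral_sub (integrable_mul_expI hf t) (integrable_mul_expI hg t)]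
  congr 1; ext u; ring

lemma wFT_continuous {f : ℝ → ℂ} (hf : Integrable f) : Continuous (wFT f) := by
  unfold wFT
  refine continuous_of_dominated (bound := fun u => ‖f u‖)
    (fun t => (integrable_mul_expI hf t).1) ?_ hf.norm ?_
  · intro t
    filter_upwards with u
    rw [norm_mul, norm_expI, mul_one]
  · filter_upwards with u
    fun_prop

lemma wFT_eq_fourier (f : ℝ → ℂ) (t : ℝ) :
    wFT f t = FourierTransform.fourier f (t / (2 * π)) := by
  rw [Real.fourier_eq']
  unfold wFT
  congr 1; ext u
  rw [smul_eq_mul, mul_comm]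
  congr 2
  simp
  have : (π : ℂ) ≠ 0 := by exact_mod_cast Real.pi_ne_zero
  field_simp

lemma InA.norm_le {F : ℝ → ℂ} {C : ℝ} (h : InA F C) (t : ℝ) : ‖F t‖ ≤ C := by
  obtain ⟨f, -, h2, h3⟩ := h
  rw [← h3]
  exact (wFT_norm_le f t).trans h2

lemma InA.congr {F G : ℝ → ℂ} {C D : ℝ} (h : InA F C) (hFG : ∀ t, F t = G t) (hCD : C ≤ D) :
    InA G D := by
  obtain ⟨f, h1, h2, h3⟩ := h
  exact ⟨f, h1, h2.trans hCD, fun t => (h3 t).trans (hFG t)⟩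

open scoped Convolution in
lemma InA.mul {F G : ℝ → ℂ} {C D : ℝ} (hF : InA F C) (hG : InA G D) :
    InA (fun t => F t * G t) (C * D) := by
  obtain ⟨f, h1, h2, h3⟩ := hF
  obtain ⟨g, k1, k2, k3⟩ := hG
  have hint := h1.integrable_convolution (ContinuousLinearMap.mul ℝ ℂ) k1
  refine ⟨_, hint, ?_, ?_⟩
  · have e := integral_convolution (ContinuousLinearMap.mul ℝ ℝ) h1.norm k1.norm
    have i := h1.norm.integrable_convolution (ContinuousLinearMap.mul ℝ ℝ) k1.norm
    calc _ ≤ ∫ x, ((fun u => ‖f u‖) ⋆[ContinuousLinearMap.mul ℝ ℝ, volume] (fun u => ‖g u‖)) x := by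
          refine integral_mono hint.norm i ?_
          intro x
          simp only [convolution, ContinuousLinearMap.mul_apply']
          refine (norm_integral_le_integral_norm _).trans (le_of_eq ?_)
          simp
      _ = (∫ u, ‖f u‖) * ∫ u, ‖g u‖ := by rw [e]; simp
      _ ≤ C * D := by
          have : 0 ≤ ∫ u, ‖f u‖ := integral_nonneg fun _ => norm_nonneg _
          have : 0 ≤ ∫ u, ‖g u‖ := integral_nonneg fun _ => norm_nonneg _
          gcongr
          linarith
  · intro t
    change _ = F t * G t
    rw [← h3, ← k3]
    have e := integral_convolution (ContinuousLinearMap.mul ℝ ℂ) (integrable_mul_expI h1 t)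
      (integrable_mul_expI k1 t)
    simp only [ContinuousLinearMap.mul_apply'] at e
    unfold wFT
    rw [← e]
    congr 1; ext x
    simp only [convolution, ContinuousLinearMap.mul_apply']
    rw [← integral_mul_const]
    congr 1; ext u
    have : Complex.exp (-Complex.I * t * x) =
      Complex.exp (-Complex.I * t * u) * Complex.exp (-Complex.I * t * (x - u : ℝ)) := by
      rw [← Complex.exp_add]; congr 1; push_cast; ring
    rw [this]; ring

lemma InA.mul_pow {F G : ℝ → ℂ} {C D : ℝ} (hF : InA F C) (hG : InA G D) (n : ℕ) :
    InA (fun t => F t * G t ^ n) (C * D ^ n) := by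
  induction n with
  | zero => exact hF.congr (by simp) (by simp)
  | succ n ih =>
    refine (ih.mul hG).congr (fun t => ?_) (le_of_eq ?_)
    · ring
    · ring

lemma InA.series {F : ℕ → ℝ → ℂ} {C : ℕ → ℝ} (h : ∀ n, InA (F n) (C n)) (hC : Summable C) :
    ∃ f : ℝ → ℂ, Integrable f ∧ ∀ t, HasSum (fun n => F n t) (wFT f t) := by
  choose f h1 h2 h3 using h
  have hs : Summable fun n => ∫ u, ‖f n u‖ :=
    hC.of_nonneg_of_le (fun n => integral_nonneg fun _ => norm_nonneg _) h2
  have hfin : ∑' n, ∫⁻ u, ‖f n u‖ₑ ≠ ⊤ := by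
    have : ∀ n, ∫⁻ u, ‖f n u‖ₑ = ENNReal.ofReal (∫ u, ‖f n u‖) := fun n => by
      rw [ofReal_integral_norm_eq_lintegral_enorm (h1 n)]
    simp_rw [this]
    exact hs.tsum_ofReal_ne_top
  have hae : ∀ᵐ u, Summable fun n => ‖f n u‖ := by
    refine summable_norm_of_tsum_eLpNorm_ne_top le_rfl (fun n => (h1 n).1) ?_
    simpa [eLpNorm_one_eq_lintegral_enorm] using hfin
  refine ⟨fun u => ∑' n, f n u, ⟨?_, ?_⟩, ?_⟩
  · refine aestronglyMeasurable_of_tendsto_ae (u := atTop)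
      (f := fun (N : ℕ) u => ∑ n ∈ Finset.range N, f n u) ?_ ?_
    · intro N
      exact Finset.aestronglyMeasurable_fun_sum _ fun n _ => (h1 n).1
    · filter_upwards [hae] with u hu
      exact hu.of_norm.hasSum.tendsto_sum_nat
  · rw [hasFiniteIntegral_iff_enorm]
    refine lt_of_le_of_lt (lintegral_mono fun u => enorm_tsum_le_tsum_enorm) ?_
    rw [lintegral_tsum fun n => (h1 n).1.enorm]
    exact hfin.lt_top
  · intro t
    have e := hasSum_integral_of_summable_integral_norm
      (F := fun n (u : ℝ) => f n u * Complex.exp (-Complex.I * t * u))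
      (fun n => integrable_mul_expI (h1 n) t) (by
        simpa only [norm_mul, norm_expI, mul_one] using hs)
    simp only [tsum_mul_right] at e
    have e2 : (fun n => F n t) =
      fun n => ∫ u : ℝ, f n u * Complex.exp (-Complex.I * t * u) := by
      ext n; rw [← h3]; rfl
    rw [e2]; exact e

lemma inA_of_C2 {F : ℝ → ℂ} {L D : ℝ} (hL : 0 ≤ L) (hF : ContDiff ℝ 2 F)
    (hs : tsupport F ⊆ Set.Icc (-L) L) (h0 : ∀ x, ‖F x‖ ≤ D)
    (h2 : ∀ x, ‖deriv (deriv F) x‖ ≤ D) : InA F (4 * L * D * π) := by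
  have hcs : HasCompactSupport F := HasCompactSupport.of_support_subset_isCompact isCompact_Icc
    ((subset_tsupport F).trans hs)
  have hF1 : ContDiff ℝ 1 (deriv F) := by
    have : ContDiff ℝ (1 + 1) F := by simpa [one_add_one_eq_two] using hF
    exact (contDiff_succ_iff_deriv.1 this).2.2
  have hF2 : Continuous (deriv (deriv F)) := hF1.continuous_deriv le_rfl
  have bnd : ∀ G : ℝ → ℂ, Continuous G → tsupport G ⊆ Set.Icc (-L) L → (∀ x, ‖G x‖ ≤ D) →
      ∀ w, ‖FourierTransform.fourier G w‖ ≤ 2 * L * D := by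
    intro G hG hGs hGD w
    have e : FourierTransform.fourier G w = wFT G (2 * π * w) := by
      rw [wFT_eq_fourier]; congr 1; field_simp
    rw [e]
    refine (wFT_norm_le _ _).trans ?_
    rw [← setIntegral_eq_integral_of_forall_compl_eq_zero (s := Set.Icc (-L) L)]
    · calc _ ≤ ∫ x in Set.Icc (-L) L, D := by
            refine setIntegral_mono hG.norm.continuousOn.integrableOn_Icc ?_ hGD
            simp
        _ = 2 * L * D := by
            simp [hL]; ring_nf; simp
    · intro x hx
      rw [image_eq_zero_of_notMem_tsupport (fun h => hx (hGs h)), norm_zero]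
  have i0 : Integrable F := hF.continuous.integrable_of_hasCompactSupport hcs
  have i1 : Integrable (deriv F) :=
    hF1.continuous.integrable_of_hasCompactSupport hcs.deriv
  have i2 : Integrable (deriv (deriv F)) :=
    hF2.integrable_of_hasCompactSupport hcs.deriv.deriv
  have e1 := Real.fourier_deriv i0 (hF.differentiable (by norm_num)) i1
  have e2 := Real.fourier_deriv i1 (hF1.differentiable (by norm_num)) i2
  have b0 := bnd F hF.continuous hs h0
  have b2 := bnd _ hF2 ((tsupport_deriv_subset.trans tsupport_deriv_subset).trans hs) h2
  have key : ∀ w, ‖FourierTransform.fourier F w‖ ≤ 4 * L * D * (1 + w ^ 2)⁻¹ := by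
    intro w
    have b0 := b0 w
    have b2 := b2 w
    rw [e2] at b2
    simp only [e1, norm_smul] at b2
    have n : ‖(2 * π * Complex.I * w : ℂ)‖ = 2 * π * |w| := by
      simp [abs_of_pos Real.pi_pos]
    rw [n] at b2
    rw [← div_eq_mul_inv, le_div_iff₀ (by positivity)]
    have : 1 * w ^ 2 ≤ (2 * π) ^ 2 * w ^ 2 := by
      gcongr
      nlinarith [Real.pi_gt_three]
    have hw : |w| * |w| = w ^ 2 := by rw [← sq, sq_abs]
    have : 2 * π * |w| * (2 * π * |w| * ‖FourierTransform.fourier F w‖) =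
      (2 * π) ^ 2 * w ^ 2 * ‖FourierTransform.fourier F w‖ := by rw [← hw]; ring
    have := norm_nonneg (FourierTransform.fourier F w)
    nlinarith
  have ic : Continuous (FourierTransform.fourier F) := by
    have : FourierTransform.fourier F = fun w => wFT F (2 * π * w) := by
      ext w; rw [wFT_eq_fourier]; congr 1; field_simp
    rw [this]
    exact (wFT_continuous i0).comp (by fun_prop)
  have iF : Integrable (FourierTransform.fourier F) :=
    (integrable_inv_one_add_sq.const_mul (4 * L * D)).mono' ic.aestronglyMeasurable
      (Eventually.of_forall key)
  have inv := hF.continuous.fourier_fourierInv_eq i0 iF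
  have nF : ∫ w, ‖FourierTransform.fourier F w‖ ≤ 4 * L * D * π := by
    rw [← integral_univ_inv_one_add_sq, ← integral_const_mul]
    exact integral_mono iF.norm (integrable_inv_one_add_sq.const_mul _) key
  set k : ℝ → ℂ := FourierTransformInv.fourierInv F with hk
  have kneg : ∀ x, k x = FourierTransform.fourier F (-x) := fun x =>
    Real.fourierInv_eq_fourier_neg F x
  have ik : Integrable k := by
    have := iF.comp_neg
    refine this.congr (Eventually.of_forall fun x => (kneg x).symm)
  have nk : ∫ x, ‖k x‖ ≤ 4 * L * D * π := by
    simp_rw [kneg]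
    rw [integral_neg_eq_self (fun x => ‖FourierTransform.fourier F x‖)]
    exact nF
  have hpi : (0 : ℝ) < 2 * π := by positivity
  refine ⟨fun u => ((2 * π)⁻¹ : ℝ) • k (u * (2 * π)⁻¹), ?_, ?_, ?_⟩
  · exact (ik.comp_mul_right' (inv_ne_zero hpi.ne')).smul ((2 * π)⁻¹ : ℝ)
  · simp_rw [norm_smul]
    rw [integral_const_mul, Measure.integral_comp_mul_right (fun x => ‖k x‖)]
    rw [inv_inv, abs_of_pos hpi, smul_eq_mul, Real.norm_of_nonneg (by positivity), ← mul_assoc,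
      inv_mul_cancel₀ hpi.ne', one_mul]
    exact nk
  · intro t
    have : wFT k (2 * π * t) = F t := by
      rw [wFT_eq_fourier, mul_div_cancel_left₀ _ hpi.ne', inv]
    rw [← this]
    unfold wFT
    have e := Measure.integral_comp_mul_right
      (fun u : ℝ => k u * Complex.exp (-Complex.I * (2 * π * t : ℝ) * u)) (2 * π)⁻¹
    rw [inv_inv, abs_of_pos hpi] at e
    have e' : (∫ u : ℝ, k u * Complex.exp (-Complex.I * (2 * π * t : ℝ) * u)) =
      (2 * π)⁻¹ • (∫ x : ℝ, k (x * (2 * π)⁻¹) *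
        Complex.exp (-Complex.I * (2 * π * t : ℝ) * (x * (2 * π)⁻¹ : ℝ))) := by
      rw [e, smul_smul, inv_mul_cancel₀ hpi.ne', one_smul]
    rw [e', ← integral_smul]
    congr 1; ext u
    rw [smul_mul_assoc]
    congr 3
    push_cast
    have : (π : ℂ) ≠ 0 := by exact_mod_cast Real.pi_ne_zero
    field_simp

/-- Smooth compactly supported functions: polynomial-times-geometric bound for `φ q^(n+2)`. -/
lemma inA_mul_pow {φ q : ℝ → ℂ} {L B : ℝ} (hL : 0 ≤ L) (hφ : ContDiff ℝ 2 φ)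
    (hq : ContDiff ℝ 2 q) (hs : tsupport φ ⊆ Set.Icc (-L) L) (hqs : HasCompactSupport q)
    (hB : 0 < B) (hqB : ∀ x, ‖q x‖ ≤ B) :
    ∃ K, ∀ n : ℕ, InA (fun t => φ t * q t ^ (n + 2)) (K * ((n + 2 : ℝ) ^ 2 * B ^ n)) := by
  have hcs : HasCompactSupport φ := HasCompactSupport.of_support_subset_isCompact isCompact_Icc
    ((subset_tsupport φ).trans hs)
  have d1 : ∀ F : ℝ → ℂ, ContDiff ℝ 2 F → ContDiff ℝ 1 (deriv F) := by
    intro F hF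
    have : ContDiff ℝ (1 + 1) F := by simpa [one_add_one_eq_two] using hF
    exact (contDiff_succ_iff_deriv.1 this).2.2
  have bd : ∀ F : ℝ → ℂ, ContDiff ℝ 2 F → HasCompactSupport F → ∃ M, 0 ≤ M ∧
      (∀ x, ‖F x‖ ≤ M) ∧ (∀ x, ‖deriv F x‖ ≤ M) ∧ (∀ x, ‖deriv (deriv F) x‖ ≤ M) := by
    intro F hF hc
    obtain ⟨M0, h0⟩ := hc.exists_bound_of_continuous hF.continuous
    obtain ⟨M1, h1⟩ := hc.deriv.exists_bound_of_continuous (d1 F hF).continuous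
    obtain ⟨M2, h2⟩ := hc.deriv.deriv.exists_bound_of_continuous
      ((d1 F hF).continuous_deriv le_rfl)
    have p0 := (norm_nonneg _).trans (h0 0)
    have p1 := (norm_nonneg _).trans (h1 0)
    have p2 := (norm_nonneg _).trans (h2 0)
    exact ⟨M0 + M1 + M2, by positivity, fun x => (h0 x).trans (by linarith),
      fun x => (h1 x).trans (by linarith), fun x => (h2 x).trans (by linarith)⟩
  obtain ⟨M, M0, a0, a1, a2⟩ := bd φ hφ hcs
  obtain ⟨Q, Q0, -, b1, b2⟩ := bd q hq hqs
  have hd : ∀ F : ℝ → ℂ, ContDiff ℝ 2 F → ∀ x, HasDerivAt F (deriv F x) x := fun F hF x =>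
    (hF.differentiable (by norm_num) x).hasDerivAt
  have hd2 : ∀ F : ℝ → ℂ, ContDiff ℝ 2 F → ∀ x, HasDerivAt (deriv F) (deriv (deriv F) x) x :=
    fun F hF x => ((d1 F hF).differentiable (by norm_num) x).hasDerivAt
  set K0 : ℝ := M * B ^ 2 + 2 * M * Q * B + M * Q * B + M * Q ^ 2 with hK0
  refine ⟨4 * L * K0 * π, fun n => ?_⟩
  have D1 : deriv (fun t => φ t * q t ^ (n + 2)) = fun t =>
      deriv φ t * q t ^ (n + 2) + φ t * ((n + 2) * q t ^ (n + 1) * deriv q t) := by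
    ext x
    have := (hd φ hφ x).mul ((hd q hq x).pow (n + 2))
    refine (this.congr_deriv ?_).deriv
    simp
  have D2 : ∀ x, deriv (deriv (fun t => φ t * q t ^ (n + 2))) x =
      deriv (deriv φ) x * q x ^ (n + 2) + 2 * (n + 2) * deriv φ x * deriv q x * q x ^ (n + 1)
       + (n + 2) * φ x * deriv (deriv q) x * q x ^ (n + 1)
       + (n + 2) * (n + 1) * φ x * deriv q x ^ 2 * q x ^ n := by
    intro x
    rw [D1]
    have h1 := (hd2 φ hφ x).mul ((hd q hq x).pow (n + 2))
    have h2 := (hd φ hφ x).mul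
      (((((hd q hq x).pow (n + 1)).const_mul ((n : ℂ) + 2))).mul (hd2 q hq x))
    refine ((h1.add h2).congr_deriv ?_).deriv
    simp
    ring
  have hn : (1 : ℝ) ≤ (n + 2 : ℝ) ^ 2 := by nlinarith [(n.cast_nonneg : (0 : ℝ) ≤ n)]
  have hn1 : (n + 2 : ℝ) ≤ (n + 2 : ℝ) ^ 2 := by nlinarith [(n.cast_nonneg : (0 : ℝ) ≤ n)]
  have hn2 : (n + 2 : ℝ) * (n + 1) ≤ (n + 2 : ℝ) ^ 2 := by
    nlinarith [(n.cast_nonneg : (0 : ℝ) ≤ n)]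
  have := inA_of_C2 (F := fun t => φ t * q t ^ (n + 2)) (D := K0 * ((n + 2 : ℝ) ^ 2 * B ^ n)) hL
    (hφ.mul (hq.pow _)) ((tsupport_mul_subset_left).trans hs) ?_ ?_
  · exact this.congr (fun _ => rfl) (le_of_eq (by ring))
  · intro x
    rw [norm_mul, norm_pow]
    calc ‖φ x‖ * ‖q x‖ ^ (n + 2) ≤ M * B ^ (n + 2) := by gcongr; exacts [a0 x, hqB x]
      _ = M * B ^ 2 * (1 * B ^ n) := by ring
      _ ≤ K0 * ((n + 2 : ℝ) ^ 2 * B ^ n) := by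
        gcongr
        have : 0 ≤ 2 * M * Q * B + M * Q * B + M * Q ^ 2 := by positivity
        linarith
  · intro x
    rw [D2]
    have n2 : ‖((n : ℂ) + 2)‖ = (n : ℝ) + 2 := by
      rw [← Nat.cast_ofNat, ← Nat.cast_add, Complex.norm_natCast]; push_cast; rfl
    have n1 : ‖((n : ℂ) + 1)‖ = (n : ℝ) + 1 := by
      rw [← Nat.cast_one, ← Nat.cast_add, Complex.norm_natCast]; push_cast; rfl
    calc _ ≤ M * B ^ (n + 2) + 2 * (n + 2) * M * Q * B ^ (n + 1)
            + (n + 2) * M * Q * B ^ (n + 1) + (n + 2) * (n + 1) * M * Q ^ 2 * B ^ n := by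
          refine (norm_add_le _ _).trans (add_le_add ((norm_add_le _ _).trans
            (add_le_add ((norm_add_le _ _).trans (add_le_add ?_ ?_)) ?_)) ?_)
          all_goals
            simp only [norm_mul, norm_pow, n2, n1, Complex.norm_ofNat]
            gcongr
            all_goals first | exact a0 x | exact a1 x | exact a2 x | exact b1 x | exact b2 x | exact hqB x
      _ = M * B ^ 2 * (1 * B ^ n) + 2 * M * Q * B * ((n + 2) * B ^ n)
            + M * Q * B * ((n + 2) * B ^ n) + M * Q ^ 2 * ((n + 2) * (n + 1) * B ^ n) := by ring
      _ ≤ M * B ^ 2 * ((n + 2 : ℝ) ^ 2 * B ^ n) + 2 * M * Q * B * ((n + 2 : ℝ) ^ 2 * B ^ n)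
            + M * Q * B * ((n + 2 : ℝ) ^ 2 * B ^ n) + M * Q ^ 2 * ((n + 2 : ℝ) ^ 2 * B ^ n) := by
          gcongr
      _ = _ := by rw [hK0]; ring

lemma inA_smooth {φ : ℝ → ℂ} {L : ℝ} (hL : 0 ≤ L) (hφ : ContDiff ℝ 2 φ)
    (hs : tsupport φ ⊆ Set.Icc (-L) L) : ∃ K, InA φ K := by
  have hcs : HasCompactSupport φ := HasCompactSupport.of_support_subset_isCompact isCompact_Icc
    ((subset_tsupport φ).trans hs)
  have h1 : ContDiff ℝ 1 (deriv φ) := by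
    have : ContDiff ℝ (1 + 1) φ := by simpa [one_add_one_eq_two] using hφ
    exact (contDiff_succ_iff_deriv.1 this).2.2
  obtain ⟨M0, b0⟩ := hcs.exists_bound_of_continuous hφ.continuous
  obtain ⟨M2, b2⟩ := hcs.deriv.deriv.exists_bound_of_continuous (h1.continuous_deriv le_rfl)
  exact ⟨_, inA_of_C2 hL hφ hs (D := max M0 M2) (fun x => (b0 x).trans (le_max_left _ _))
    (fun x => (b2 x).trans (le_max_right _ _))⟩

lemma wFT_contDiff {g : ℝ → ℂ} (hg : Continuous g) (hgs : HasCompactSupport g) :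
    ContDiff ℝ 2 (wFT g) := by
  have : wFT g = fun t => FourierTransform.fourier g (t / (2 * π)) := by
    ext t; exact wFT_eq_fourier g t
  rw [this]
  have h : ContDiff ℝ ((2 : ℕ∞) : WithTop ℕ∞) (FourierTransform.fourier g) := by
    refine Real.contDiff_fourier fun n _ => ?_
    refine Continuous.integrable_of_hasCompactSupport (by fun_prop) ?_
    exact hgs.norm.mul_left
  exact ContDiff.comp (g := FourierTransform.fourier g) h (by fun_prop)

/-- Abstract division step. -/
lemma division_core {c a : ℝ} (hc : 0 < c) {E : ℝ → ℂ} (hE : Integrable E)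
    (hnv : ∀ t : ℝ, |t| < 3 * c →
      (1 + t * Complex.I) * (Complex.I * t * wFT E t + a) ≠ 0)
    {φ : ℝ → ℂ} (hφ : ContDiff ℝ 2 φ) (hφs : tsupport φ ⊆ Set.Ioo (-c) c) :
    ∃ f : ℝ → ℂ, Integrable f ∧
      (∀ t : ℝ, |t| < c →
        wFT f t * ((1 + t * Complex.I) * (Complex.I * t * wFT E t + a)) = φ t) ∧
      (∀ t : ℝ, c ≤ |t| → wFT f t = 0) := by
  have hEc := wFT_continuous hE
  -- lower bound
  obtain ⟨δ, hδ, hlow⟩ : ∃ δ : ℝ, 0 < δ ∧ ∀ t : ℝ, |t| ≤ 2 * c →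
      δ ≤ ‖(1 + t * Complex.I) * (Complex.I * t * wFT E t + a)‖ := by
    obtain ⟨t0, ht0, hmin⟩ := (isCompact_Icc (a := -(2 * c)) (b := 2 * c)).exists_isMinOn
      ⟨0, by constructor <;> linarith⟩
      (f := fun t : ℝ => ‖(1 + t * Complex.I) * (Complex.I * t * wFT E t + a)‖)
      (by fun_prop)
    refine ⟨_, norm_pos_iff.2 (hnv t0 ?_), fun t ht => hmin (abs_le.1 ht)⟩
    have := abs_le.2 ht0
    linarith
  -- cutoffs
  let η : ContDiffBump (0 : ℝ) := ⟨2 * c, 3 * c, by linarith, by linarith⟩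
  let χ : ContDiffBump (0 : ℝ) := ⟨c, 2 * c, by linarith, by linarith⟩
  have hη1 : ∀ t : ℝ, |t| ≤ 2 * c → η t = 1 := fun t ht =>
    η.one_of_mem_closedBall (by simpa [η] using ht)
  have hχ1 : ∀ t : ℝ, |t| ≤ c → χ t = 1 := fun t ht =>
    χ.one_of_mem_closedBall (by simpa [χ] using ht)
  have hofR : ContDiff ℝ 2 (fun t : ℝ => (t : ℂ)) := Complex.ofRealCLM.contDiff
  have hηC : ContDiff ℝ 2 (fun t : ℝ => ((η t : ℝ) : ℂ)) := hofR.comp η.contDiff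
  have hχC : ContDiff ℝ 2 (fun t : ℝ => ((χ t : ℝ) : ℂ)) := hofR.comp χ.contDiff
  have hη_s : tsupport (fun t : ℝ => ((η t : ℝ) : ℂ)) ⊆ Set.Icc (-(3 * c)) (3 * c) := by
    refine (tsupport_comp_subset (g := fun x : ℝ => (x : ℂ)) (by simp) η).trans ?_
    rw [η.tsupport_eq, Real.closedBall_eq_Icc]; simp [η]
  have hχ_s : tsupport (fun t : ℝ => ((χ t : ℝ) : ℂ)) ⊆ Set.Icc (-(2 * c)) (2 * c) := by
    refine (tsupport_comp_subset (g := fun x : ℝ => (x : ℂ)) (by simp) χ).trans ?_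
    rw [χ.tsupport_eq, Real.closedBall_eq_Icc]; simp [χ]
  obtain ⟨K, hK⟩ := inA_smooth (L := 3 * c) (by positivity)
    (φ := fun t : ℝ => ((η t : ℝ) : ℂ) * ((1 + t * Complex.I) * (Complex.I * t)))
    (hηC.mul (by fun_prop)) (tsupport_mul_subset_left.trans hη_s)
  have hK0 : 0 ≤ K := (norm_nonneg _).trans (hK.norm_le 0)
  -- approximation
  obtain ⟨g, hgs, hgE, hgc, hgi⟩ := hE.exists_hasCompactSupport_integral_sub_le
    (ε := δ / (3 * (K + 1))) (by positivity)
  set R : ℝ → ℂ := fun t => (((η t : ℝ) : ℂ) * ((1 + t * Complex.I) * (Complex.I * t))) *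
    wFT (fun u => E u - g u) t with hR
  have hRA : InA R (δ / 3) := by
    refine (hK.mul (G := wFT (fun u => E u - g u)) (D := δ / (3 * (K + 1)))
      ⟨_, hE.sub hgi, hgE, fun t => rfl⟩).congr (fun t => rfl) ?_
    rw [mul_div_assoc', div_le_div_iff₀ (by positivity) (by positivity)]
    nlinarith
  set P : ℝ → ℂ := fun t => (1 + t * Complex.I) * (Complex.I * t * wFT g t + a) with hP
  have hPC : ContDiff ℝ 2 P := by
    have := wFT_contDiff hgc hgs
    fun_prop
  have hPR : ∀ t : ℝ, |t| ≤ 2 * c →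
      (1 + t * Complex.I) * (Complex.I * t * wFT E t + a) = P t + R t := by
    intro t ht
    simp only [hP, hR, hη1 t ht, wFT_sub hE hgi]
    push_cast
    ring
  have hPlow : ∀ t : ℝ, |t| ≤ 2 * c → 2 * δ / 3 ≤ ‖P t‖ := by
    intro t ht
    have h1 := hlow t ht
    rw [hPR t ht] at h1
    have h2 := norm_add_le (P t) (R t)
    have h3 := hRA.norm_le t
    linarith
  have hPne : ∀ t : ℝ, |t| ≤ 2 * c → P t ≠ 0 := fun t ht =>
    norm_pos_iff.1 (lt_of_lt_of_le (by positivity) (hPlow t ht))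
  set q : ℝ → ℂ := fun t => ((χ t : ℝ) : ℂ) * (P t)⁻¹ with hq
  have hqs : tsupport q ⊆ Set.Icc (-(2 * c)) (2 * c) := tsupport_mul_subset_left.trans hχ_s
  have hqC : ContDiff ℝ 2 q := by
    refine contDiff_iff_contDiffAt.2 fun t => ?_
    by_cases ht : t ∈ tsupport q
    swap
    · exact (contDiffAt_const (c := (0 : ℂ))).congr_of_eventuallyEq
        (notMem_tsupport_iff_eventuallyEq.1 ht)
    exact hχC.contDiffAt.mul (hPC.contDiffAt.inv (hPne t (abs_le.2 (hqs ht))))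
  have hqB : ∀ t, ‖q t‖ ≤ 3 / (2 * δ) := by
    intro t
    by_cases ht : |t| ≤ 2 * c
    · simp only [hq, norm_mul, norm_inv]
      have h1 : ‖((χ t : ℝ) : ℂ)‖ ≤ 1 := by
        rw [Complex.norm_real, Real.norm_of_nonneg χ.nonneg]; exact χ.le_one
      have h2 := hPlow t ht
      calc _ ≤ 1 * (2 * δ / 3)⁻¹ := by gcongr
        _ = _ := by rw [one_mul, inv_div]
    · rw [image_eq_zero_of_notMem_tsupport (fun h => ht (abs_le.2 (hqs h)))]
      rw [norm_zero]; positivity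
  obtain ⟨K1, hK1⟩ := inA_mul_pow (φ := fun t => φ t * P t) (q := q) (L := c) (B := 3 / (2 * δ))
    hc.le (hφ.mul hPC) hqC
    ((tsupport_mul_subset_left.trans hφs).trans Set.Ioo_subset_Icc_self)
    (HasCompactSupport.of_support_subset_isCompact isCompact_Icc
      ((subset_tsupport q).trans hqs)) (by positivity) hqB
  have hRn : InA (fun t => - R t) (δ / 3) := by
    obtain ⟨f, h1, h2, h3⟩ := hRA
    refine ⟨fun u => - f u, h1.neg, by simpa using h2, fun t => ?_⟩
    change _ = - R t
    rw [← h3]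
    simp only [wFT, neg_mul]
    rw [integral_neg]
  have hsum : Summable fun n : ℕ =>
      K1 * ((n + 2 : ℝ) ^ 2 * (3 / (2 * δ)) ^ n) * (δ / 3) ^ n := by
    have s1 : Summable fun n : ℕ => (n : ℝ) ^ 2 * (1 / 2 : ℝ) ^ n :=
      summable_pow_mul_geometric_of_norm_lt_one 2 (by norm_num)
    have s2 := (((summable_nat_add_iff 2).2 s1).mul_left 4).mul_left K1
    refine s2.congr fun n => ?_
    have : (1 / 2 : ℝ) ^ n = (3 / (2 * δ)) ^ n * (δ / 3) ^ n := by
      rw [← _root_.mul_pow]; congr 1; field_simp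
    rw [pow_add, this]
    push_cast
    ring
  obtain ⟨f, hf, hfs⟩ := InA.series (fun n => (hK1 n).mul_pow hRn n) hsum
  refine ⟨f, hf, fun t ht => ?_, fun t ht => ?_⟩
  · have ht2 : |t| ≤ 2 * c := by linarith
    have hqt : q t = (P t)⁻¹ := by simp [hq, hχ1 t ht.le]
    have hP0 := hPne t ht2
    have hr : ‖-(q t * R t)‖ < 1 := by
      rw [norm_neg, norm_mul]
      calc _ ≤ 3 / (2 * δ) * (δ / 3) := by gcongr; exacts [hqB t, hRA.norm_le t]
        _ < 1 := by field_simp; norm_num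
    have h1 := (hasSum_geometric_of_norm_lt_one hr).mul_left (φ t * P t * q t ^ 2)
    have h2 : HasSum (fun n : ℕ => φ t * P t * q t ^ (n + 2) * (-R t) ^ n)
        (φ t * P t * q t ^ 2 * (1 - -(q t * R t))⁻¹) := by
      have aux : ∀ (x z r : ℂ) (n : ℕ),
          x * z ^ 2 * (-(z * r)) ^ n = x * z ^ (n + 2) * (-r) ^ n := by
        intro x z r n
        rw [show -(z * r) = z * (-r) by ring, _root_.mul_pow]; ring
      simpa only [aux] using h1
    rw [(hfs t).unique h2, hPR t ht2, hqt]
    have hne : P t + R t ≠ 0 := by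
      rw [← hPR t ht2]; exact hnv t (by linarith)
    have e : (1 - -((P t)⁻¹ * R t)) = (P t + R t) / P t := by field_simp; ring
    rw [e]
    field_simp
  · have h0 : φ t = 0 := image_eq_zero_of_notMem_tsupport fun h =>
      absurd (abs_lt.2 (hφs h)) (not_lt.2 ht)
    have := hfs t
    simp only [h0, zero_mul] at this
    exact this.unique hasSum_zero

/-- **Wiener division step.** If the boundary value `(1+it)(itÊ₁(t) + a)` of `(s-1)ζ(s)`
does not vanish for `|t| < 3c`, then for any smooth `φ` supported in `(-c, c)` there is
`f ∈ L¹` whose Fourier transform satisfies `f̂(t)·(1+it)(itÊ₁(t)+a) = φ(t)` for `|t| < c`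
and `f̂(t) = 0` for `|t| ≥ c`. -/
theorem wiener_division_step
    (p : ℕ → ℝ) (hmono : Monotone p) (hp1 : 1 < p 0) (hptop : Tendsto p atTop atTop)
    (a : ℝ) (ha : 0 < a) (hE₁ : Integrable (beurlingE₁ p a))
    (c : ℝ) (hc : 0 < c)
    (hnv : ∀ t : ℝ, |t| < 3 * c →
      (1 + t * Complex.I) * (Complex.I * t * beurlingE₁FT p a t + a) ≠ 0) :
    ∀ φ : ℝ → ℂ, ContDiff ℝ (⊤ : ℕ∞) φ → tsupport φ ⊆ Set.Ioo (-c) c →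
      ∃ f : ℝ → ℂ, Integrable f ∧
        (∀ t : ℝ, |t| < c →
          (∫ u : ℝ, f u * Complex.exp (-Complex.I * t * u)) *
            ((1 + t * Complex.I) * (Complex.I * t * beurlingE₁FT p a t + a)) = φ t) ∧
        (∀ t : ℝ, c ≤ |t| →
          (∫ u : ℝ, f u * Complex.exp (-Complex.I * t * u)) = 0) := by
  intro φ hφ hφs
  exact division_core hc (E := fun u => (beurlingE₁ p a u : ℂ)) hE₁.ofReal hnv
    (hφ.of_le (WithTop.coe_le_coe.2 (le_top : (2 : ℕ∞) ≤ ⊤))) hφs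
end

section
/- Suppose a > 0 and the function E₁ defined by E₁(u) = e^{−u} N(e^u) − a for u > 0 and E₁(u) = 0 for u ≤ 0 is integrable on ℝ; let Ê₁(t) = ∫_ℝ E₁(u) e^{−itu} du. Let c > 0 and let η : ℝ → ℝ be smooth, even, supported in (−3c, 3c), with η(t) = 1 for |t| ≤ 2c. Let χ₁ and χ₂ be the Schwartz functions whose Fourier transforms are χ̂₁(t) = it(1 + it)η(t) and χ̂₂(t) = a(1 + it)η(t). Then the function χ₁ ∗ E₁ + χ₂ is integrable on ℝ and its Fourier transform at t equals η(t) · (1 + it)(it Ê₁(t) + a), i.e., the boundary value η(t)·it·ζ(1 + it). -/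
open MeasureTheory Real Filter Complex

/-- The cut-off boundary value `η(t)·it·ζ(1+it) = η(t)(1+it)(itÊ₁(t)+a)` is the Fourier
transform of the `L¹`-function `χ₁ ∗ E₁ + χ₂`, where `χ̂₁(t) = it(1+it)η(t)` and
`χ̂₂(t) = a(1+it)η(t)`. -/
theorem cutoff_boundary_is_L1_fourier_transform
    (p : ℕ → ℝ) (hmono : Monotone p) (hp1 : 1 < p 0) (hptop : Tendsto p atTop atTop)
    (a : ℝ) (ha : 0 < a) (hE₁ : Integrable (beurlingE₁ p a))
    (c : ℝ) (hc : 0 < c)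
    (η : ℝ → ℝ) (hη : ContDiff ℝ (⊤ : ℕ∞) η) (hηeven : ∀ t, η (-t) = η t)
    (hηsupp : tsupport η ⊆ Set.Ioo (-(3 * c)) (3 * c))
    (hηone : ∀ t : ℝ, |t| ≤ 2 * c → η t = 1)
    (χ₁ χ₂ : SchwartzMap ℝ ℂ)
    (hχ₁ : ∀ t : ℝ, (∫ u : ℝ, χ₁ u * Complex.exp (-Complex.I * t * u)) =
      Complex.I * t * (1 + Complex.I * t) * (η t : ℂ))
    (hχ₂ : ∀ t : ℝ, (∫ u : ℝ, χ₂ u * Complex.exp (-Complex.I * t * u)) =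
      (a : ℂ) * (1 + Complex.I * t) * (η t : ℂ)) :
    Integrable (fun u : ℝ => (∫ v : ℝ, χ₁ (u - v) * (beurlingE₁ p a v : ℂ)) + χ₂ u) ∧
      ∀ t : ℝ,
        (∫ u : ℝ, ((∫ v : ℝ, χ₁ (u - v) * (beurlingE₁ p a v : ℂ)) + χ₂ u) *
            Complex.exp (-Complex.I * t * u)) =
          (η t : ℂ) * ((1 + Complex.I * t) * (Complex.I * t * beurlingE₁FT p a t + a)) := by
  have hE : Integrable (fun u : ℝ => (beurlingE₁ p a u : ℂ)) := hE₁.ofReal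
  have hχi : Integrable (fun u : ℝ => χ₁ u) := χ₁.integrable
  have hχ2i : Integrable (fun u : ℝ => χ₂ u) := χ₂.integrable
  have hexp : ∀ t u : ℝ, ‖Complex.exp (-Complex.I * t * u)‖ = 1 := by
    intro t u
    have h : -Complex.I * (t : ℂ) * u = ((-(t * u) : ℝ) : ℂ) * Complex.I := by
      push_cast; ring
    rw [h, Complex.norm_exp_ofReal_mul_I]
  have hmul : ∀ (t : ℝ) (f : ℝ → ℂ), Integrable f →
      Integrable (fun u : ℝ => f u * Complex.exp (-Complex.I * t * u)) := by
    intro t f hf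
    refine hf.mul_bdd (c := 1) ?_ (Eventually.of_forall fun u => (hexp t u).le)
    exact (by fun_prop : Continuous fun u : ℝ =>
      Complex.exp (-Complex.I * t * u)).aestronglyMeasurable
  have hconv : Integrable (fun u : ℝ => ∫ v : ℝ, χ₁ (u - v) * (beurlingE₁ p a v : ℂ)) := by
    have h := hE.integrable_convolution (ContinuousLinearMap.mul ℝ ℂ) hχi
    refine h.congr (Eventually.of_forall fun u => ?_)
    simp only [convolution, ContinuousLinearMap.mul_apply']
    exact integral_congr_ae (Eventually.of_forall fun v => mul_comm _ _)
  refine ⟨hconv.add hχ2i, fun t => ?_⟩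
  have key := integral_convolution (μ := volume) (ν := volume)
    (ContinuousLinearMap.mul ℝ ℂ) (hmul t _ hE) (hmul t _ hχi)
  simp only [convolution, ContinuousLinearMap.mul_apply'] at key
  rw [hχ₁ t] at key
  have h1 : (∫ u : ℝ, (∫ v : ℝ, χ₁ (u - v) * (beurlingE₁ p a v : ℂ)) *
      Complex.exp (-Complex.I * t * u)) = beurlingE₁FT p a t *
        (Complex.I * t * (1 + Complex.I * t) * (η t : ℂ)) := by
    rw [beurlingE₁FT, ← key]
    refine integral_congr_ae (Eventually.of_forall fun u => ?_)
    simp only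
    rw [← integral_mul_const]
    refine integral_congr_ae (Eventually.of_forall fun v => ?_)
    simp only
    have h : Complex.exp (-Complex.I * t * u) = Complex.exp (-Complex.I * t * v) *
        Complex.exp (-Complex.I * t * ((u - v : ℝ) : ℂ)) := by
      rw [← Complex.exp_add]; congr 1; push_cast; ring
    rw [h]; ring
  simp only [add_mul]
  rw [integral_add (hmul t _ hconv) (hmul t _ hχ2i), h1, hχ₂ t]
  ring
end

section
/- For every c > 0 there exists a smooth compactly supported function φ : ℝ → ℂ, not identically zero, with support contained in (−c, c), such that its Fourier transform φ̂(u) = ∫_ℝ φ(t) e^{−iut} dt is real and nonnegative for all u ∈ ℝ and satisfies ∫₀^∞ e^{−u} φ̂(u) du > 0. -/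
open MeasureTheory Real Filter Complex

/-- The Fourier transform `φ̂(u) = ∫ φ(t) e^{-iut} dt` of a test function. -/
noncomputable def testFT (φ : ℝ → ℂ) (u : ℝ) : ℂ :=
  ∫ t : ℝ, φ t * Complex.exp (-Complex.I * u * t)

/-- `testFT` is a rescaling of the Mathlib Fourier transform. -/
theorem testFT_eq_fourier (φ : ℝ → ℂ) (u : ℝ) :
    testFT φ u = FourierTransform.fourier φ (u / (2 * π)) := by
  rw [testFT, Real.fourier_real_eq_integral_exp_smul]
  congr 1
  ext t
  rw [smul_eq_mul, mul_comm]
  congr 2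
  have : (π : ℂ) ≠ 0 := by exact_mod_cast Real.pi_ne_zero
  push_cast
  field_simp

theorem testFT_im_of_even (f : ℝ → ℝ) (hf : ∀ t, f (-t) = f t) (u : ℝ) :
    (testFT (fun t => (f t : ℂ)) u).im = 0 := by
  rw [← Complex.conj_eq_iff_im, testFT, ← integral_conj,
    ← integral_neg_eq_self (fun t : ℝ => (f t : ℂ) * Complex.exp (-Complex.I * u * t))]
  congr 1
  ext t
  rw [map_mul, ← Complex.exp_conj, hf]
  simp

theorem exists_testfunction_nonneg_fourier (c : ℝ) (hc : 0 < c) :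
    ∃ φ : ℝ → ℂ, ContDiff ℝ (⊤ : ℕ∞) φ ∧ φ ≠ 0 ∧ tsupport φ ⊆ Set.Ioo (-c) c ∧
      (∀ u : ℝ, (testFT φ u).im = 0 ∧ 0 ≤ (testFT φ u).re) ∧
      0 < ∫ u in Set.Ioi (0 : ℝ), Real.exp (-u) * (testFT φ u).re := by
  let b : ContDiffBump (0 : ℝ) := ⟨c / 8, c / 4, by positivity, by linarith⟩
  let f : ℝ → ℂ := fun t => (b t : ℂ)
  have hfs : ContDiff ℝ (⊤ : ℕ∞) f := Complex.ofRealCLM.contDiff.comp b.contDiff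
  have hfc : HasCompactSupport f := b.hasCompactSupport.comp_left (g := Complex.ofReal) (by simp)
  have hfi : Integrable f := hfs.continuous.integrable_of_hasCompactSupport hfc
  have hsupp : Function.support f ⊆ Set.Icc (-(c/4)) (c/4) := by
    intro t ht
    have : t ∈ Function.support b := by
      intro h; exact ht (by simp [f, h])
    rw [b.support_eq, Metric.mem_ball, Real.dist_eq, sub_zero] at this
    exact abs_le.1 (le_of_lt this)
  let φ : ℝ → ℂ := MeasureTheory.convolution f f (ContinuousLinearMap.mul ℝ ℂ) volume
  have hφ : φ = MeasureTheory.convolution f f (ContinuousLinearMap.mul ℂ ℂ) volume := rfl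
  have hsq : ∀ u, testFT φ u = testFT f u * testFT f u := by
    intro u
    rw [testFT_eq_fourier, testFT_eq_fourier, hφ, Real.fourier_mul_convolution_eq hfi hfi]
  have him : ∀ u, (testFT f u).im = 0 := testFT_im_of_even b (fun t => b.neg t)
  have hre : ∀ u, (testFT φ u).re = (testFT f u).re ^ 2 := by
    intro u; rw [hsq, Complex.mul_re, him]; ring
  have h0 : 0 < (testFT f 0).re := by
    have : testFT f 0 = ((∫ t, b t : ℝ) : ℂ) := by
      rw [testFT, ← integral_complex_ofReal]; simp [f]
    rw [this, Complex.ofReal_re]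
    exact b.integral_pos
  have hcont : Continuous (fun u => testFT f u) := by
    have h1 : Continuous (FourierTransform.fourier f) :=
      VectorFourier.fourierIntegral_continuous Real.continuous_fourierChar
        (by exact continuous_inner) hfi
    have : (fun u => testFT f u) = fun u => FourierTransform.fourier f (u / (2 * π)) := by
      ext u; exact testFT_eq_fourier f u
    rw [this]
    exact h1.comp (by fun_prop)
  have hbd : ∀ u, |(testFT f u).re| ≤ ∫ t, ‖f t‖ := by
    intro u
    refine (Complex.abs_re_le_norm _).trans ?_
    rw [testFT]
    refine (norm_integral_le_integral_norm _).trans (le_of_eq ?_)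
    congr 1; ext t
    rw [norm_mul, Complex.norm_exp]; simp
  refine ⟨φ, ?_, ?_, ?_, ?_, ?_⟩
  · exact hfc.contDiff_convolution_right _ hfi.locallyIntegrable hfs
  · intro h
    have := hre 0
    rw [h] at this
    simp [testFT] at this
    simp [testFT] at h0
    rw [eq_comm] at this
    simp_all
  · have h1 : tsupport φ ⊆ Set.Icc (-(c/2)) (c/2) := by
      refine closure_minimal ?_ isClosed_Icc
      refine (support_convolution_subset _).trans ?_
      rintro _ ⟨x, hx, y, hy, rfl⟩
      have := hsupp hx
      have := hsupp hy
      simp only [Set.mem_Icc] at *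
      constructor <;> linarith
    exact h1.trans (fun x hx => ⟨by linarith [hx.1], by linarith [hx.2]⟩)
  · intro u
    refine ⟨?_, by rw [hre]; positivity⟩
    rw [hsq, Complex.mul_im, him]; ring
  · simp only [hre]
    have hrc : Continuous fun u => (testFT f u).re := Complex.continuous_re.comp hcont
    have hint : IntegrableOn (fun u => Real.exp (-u) * (testFT f u).re ^ 2) (Set.Ioi 0) := by
      refine Integrable.mul_bdd (c := (∫ t, ‖f t‖) ^ 2) (integrableOn_exp_neg_Ioi 0)
        (hrc.pow 2).aestronglyMeasurable (ae_of_all _ fun u => ?_)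
      rw [norm_pow, Real.norm_eq_abs]
      exact pow_le_pow_left₀ (abs_nonneg _) (hbd u) 2
    rw [setIntegral_pos_iff_support_of_nonneg_ae (ae_of_all _ fun u => by
      dsimp only [Pi.zero_apply]; positivity) hint]
    obtain ⟨δ, hδ, h⟩ := Metric.eventually_nhds_iff.1 (hrc.continuousAt.eventually (lt_mem_nhds h0))
    refine lt_of_lt_of_le (b := volume (Set.Ioo 0 δ)) (by simp [hδ]) (measure_mono fun u hu => ?_)
    have hp := h (y := u) (by rw [Real.dist_eq, sub_zero, abs_of_pos hu.1]; exact hu.2)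
    refine ⟨?_, hu.1⟩
    have : 0 < Real.exp (-u) * (testFT f u).re ^ 2 := by positivity
    exact this.ne'
end
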